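/- arXiv:1802.09452 — 12 statements merged into one kernel-verified Lean document; each statement's English description precedes it below -/
import Mathlib

section
/- Let n be a positive integer and d = n². Then every triple (a,b,c) ∈ ℤ³ with b² − 4ac = n² lies in the SL₂(ℤ)-orbit of exactly one of the triples (0, n, j) with 0 ≤ j < n. In particular, the set {(a,b,c) ∈ ℤ³ : b² − 4ac = n²} decomposes into exactly n orbits under SL₂(ℤ). -/
/-!
The form attached to `(0, n, j) · g` splits as `(γx + δy)(sx + ty)`, where `(γ, δ)` is the bottom
row of `g = (α, β; γ, δ)` and `(s, t) = n(α, β) + j(γ, δ)`. So `(0, n, j) · g = (a, b, c)` says that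
the matrix `(a, p; q, c)` with `p = (b + n)/2` and `q = (b - n)/2` equals the product of the column
`(s, t)` and the primitive row `(γ, δ)`.

Existence: `b² - 4ac = n²` means `ac = pq`, so this nonzero integer matrix has rank one and such a
factorization exists (`exists_rank_one_factorization`). Complete `(γ, δ)` to a matrix of
determinant one with top row `(α₀, β₀)`. As `sδ - tγ = p - q = n`, we have
`(s, t) = n(α₀, β₀) + k(γ, δ)` for some `k`. Adding a multiple of the bottom row to the top row
changes `k` by a multiple of `n`, which brings it into `[0, n)`.

Uniqueness: the row `(γ, δ)` and the column `(s, t)` are determined up to a common sign, and `j`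
modulo `n` is determined by `j(γ, δ) ≡ (s, t)` because `(γ, δ)` is primitive.
-/

/-- The right action of `g = (α, β; γ, δ) ∈ SL₂(ℤ)` on a triple `(a,b,c)`, corresponding to
the substitution action `Q ↦ Q ∘ gᵗ` on the binary quadratic form `Q = ax² + bxy + cy²`. -/
def formAct (v : ℤ × ℤ × ℤ) (g : Matrix.SpecialLinearGroup (Fin 2) ℤ) : ℤ × ℤ × ℤ :=
  (v.1 * (g 0 0) ^ 2 + v.2.1 * (g 0 0) * (g 1 0) + v.2.2 * (g 1 0) ^ 2,
   2 * v.1 * (g 0 0) * (g 0 1) + v.2.1 * ((g 0 0) * (g 1 1) + (g 0 1) * (g 1 0))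
     + 2 * v.2.2 * (g 1 0) * (g 1 1),
   v.1 * (g 0 1) ^ 2 + v.2.1 * (g 0 1) * (g 1 1) + v.2.2 * (g 1 1) ^ 2)

/-- A singular `2 × 2` integer matrix with nonzero top row is the product of a column and a
primitive row. -/
lemma exists_rank_one_factorization_of_row_ne_zero (a p q c : ℤ) (h0 : ¬(a = 0 ∧ p = 0))
    (h : a * c = p * q) :
    ∃ γ δ s t : ℤ, IsCoprime γ δ ∧ a = γ * s ∧ p = δ * s ∧ q = γ * t ∧ c = δ * t := by
  have hpos : 0 < Int.gcd a p := by
    rw [Nat.pos_iff_ne_zero, Ne, Int.gcd_eq_zero_iff]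
    exact h0
  obtain ⟨γ, δ, hc, ha, hp⟩ := Int.exists_gcd_one hpos
  have hg : (Int.gcd a p : ℤ) ≠ 0 := by exact_mod_cast hpos.ne'
  have hcop : IsCoprime γ δ := Int.isCoprime_iff_gcd_eq_one.2 hc
  have hs : γ * c = δ * q := by
    apply mul_left_cancel₀ hg
    linear_combination h - c * ha + q * hp
  obtain ⟨x, y, hxy⟩ := hcop
  refine ⟨γ, δ, Int.gcd a p, x * q + y * c, ⟨x, y, hxy⟩, ha, hp, ?_, ?_⟩
  · linear_combination (-q) * hxy - y * hs
  · linear_combination (-c) * hxy + x * hs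

lemma exists_rank_one_factorization (n a p q c : ℤ) (hn : 0 < n) (hpq : p - q = n)
    (h : a * c = p * q) :
    ∃ γ δ s t : ℤ, IsCoprime γ δ ∧ a = γ * s ∧ p = δ * s ∧ q = γ * t ∧ c = δ * t := by
  by_cases h0 : a = 0 ∧ p = 0
  · obtain ⟨γ, δ, s, t, hc, h1, h2, h3, h4⟩ :=
      exists_rank_one_factorization_of_row_ne_zero q c a p (by omega) (by linear_combination -h)
    exact ⟨γ, δ, t, s, hc, h3, h4, h1, h2⟩
  · exact exists_rank_one_factorization_of_row_ne_zero a p q c h0 h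

/-- The triple `(0, n, j) · g`, read as the rank-one factorization of `(a, p; q, c)` for
`p = (b + n)/2` and `q = (b - n)/2`. -/
lemma factorization_of_formAct_eq (n j a b c p q : ℤ) (hp : b + n = 2 * p) (hq : b - n = 2 * q)
    (g : Matrix.SpecialLinearGroup (Fin 2) ℤ) (h : formAct (0, n, j) g = (a, b, c)) :
    ∃ α β γ δ : ℤ, α * δ - β * γ = 1 ∧ a = γ * (n * α + j * γ) ∧ p = δ * (n * α + j * γ) ∧
      q = γ * (n * β + j * δ) ∧ c = δ * (n * β + j * δ) := by
  have hd : g 0 0 * g 1 1 - g 0 1 * g 1 0 = 1 := by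
    have := g.det_coe
    rwa [Matrix.det_fin_two] at this
  simp only [formAct, Prod.mk.injEq] at h
  obtain ⟨h1, h2, h3⟩ := h
  refine ⟨g 0 0, g 0 1, g 1 0, g 1 1, hd, ?_, ?_, ?_, ?_⟩
  · linear_combination -h1
  · apply mul_left_cancel₀ (two_ne_zero (α := ℤ))
    linear_combination -hp - h2 - n * hd
  · apply mul_left_cancel₀ (two_ne_zero (α := ℤ))
    linear_combination -hq - h2 + n * hd
  · linear_combination -h3

lemma dvd_sub_of_factorizations {n j j' α β γ δ α' β' γ' δ' : ℤ} (hn : 0 < n)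
    (hd : α * δ - β * γ = 1) (hd' : α' * δ' - β' * γ' = 1)
    (h1 : γ * (n * α + j * γ) = γ' * (n * α' + j' * γ'))
    (h2 : δ * (n * α + j * γ) = δ' * (n * α' + j' * γ'))
    (h3 : γ * (n * β + j * δ) = γ' * (n * β' + j' * δ'))
    (h4 : δ * (n * β + j * δ) = δ' * (n * β' + j' * δ')) : n ∣ j - j' := by
  -- The two primitive rows are parallel: their determinant kills `(s, t)`, hence also
  -- `sδ - tγ = n`.
  have hpar : γ * δ' = δ * γ' := by
    apply mul_left_cancel₀ hn.ne'
    linear_combination (δ * δ') * h1 - (δ * γ') * h2 - (γ * δ') * h3 + (γ * γ') * h4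
      - n * (γ * δ' - δ * γ') * hd
  obtain ⟨u, hu⟩ : ∃ u, u = α * δ' - β * γ' := ⟨_, rfl⟩
  have hγ : γ' = u * γ := by rw [hu]; linear_combination (-γ') * hd - α * hpar
  have hδ : δ' = u * δ := by rw [hu]; linear_combination (-δ') * hd - β * hpar
  have huu : u * u = 1 := by
    have : u * (α' * δ - β' * γ) = 1 := by
      linear_combination hd' - α' * hδ + β' * hγ
    rcases Int.isUnit_iff.1 (IsUnit.of_mul_eq_one _ this) with h | h <;> rw [h] <;> norm_num
  have hs : n * α + j * γ = u * (n * α' + j' * γ') := by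
    rw [hu]; linear_combination (-(n * α + j * γ)) * hd + α * h2 - β * h1
  have ht : n * β + j * δ = u * (n * β' + j' * δ') := by
    rw [hu]; linear_combination (-(n * β + j * δ)) * hd + α * h4 - β * h3
  have e1 : (j - j') * γ = n * (u * α' - α) := by
    linear_combination hs + u * j' * hγ + j' * γ * huu
  have e2 : (j - j') * δ = n * (u * β' - β) := by
    linear_combination ht + u * j' * hδ + j' * δ * huu
  exact ⟨α * (u * β' - β) - β * (u * α' - α), by
    linear_combination (-(j - j')) * hd + α * e2 - β * e1⟩

/-- Every integer triple `(a,b,c)` with `b² − 4ac = n²` lies in the `SL₂(ℤ)`-orbit of exactly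
one of the triples `(0, n, j)` with `0 ≤ j < n`; in particular the set of such triples
decomposes into exactly `n` orbits. -/
theorem orbit_classification_square_disc (n : ℕ) (hn : 0 < n) (a b c : ℤ)
    (h : b ^ 2 - 4 * a * c = (n : ℤ) ^ 2) :
    ∃! j : ℕ, j < n ∧ ∃ g : Matrix.SpecialLinearGroup (Fin 2) ℤ,
      formAct (0, (n : ℤ), (j : ℤ)) g = (a, b, c) := by
  have hn' : (0 : ℤ) < n := by exact_mod_cast hn
  obtain ⟨p, hp⟩ : ∃ p : ℤ, b + n = 2 * p := by
    have : Even (b ^ 2 - (n : ℤ) ^ 2) := ⟨2 * a * c, by linear_combination h⟩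
    have : Even (b + n) := by
      simpa [Int.even_sub, Int.even_add, Int.even_pow] using this
    obtain ⟨p, hp⟩ := this
    exact ⟨p, by omega⟩
  obtain ⟨q, hq⟩ : ∃ q : ℤ, b - n = 2 * q := ⟨p - n, by linear_combination hp⟩
  have hac : a * c = p * q := by
    apply mul_left_cancel₀ (four_ne_zero (α := ℤ))
    linear_combination -h + (b - n) * hp + 2 * p * hq
  apply existsUnique_of_exists_of_unique
  · obtain ⟨γ, δ, s, t, ⟨x, y, hxy⟩, h1, h2, h3, h4⟩ :=
      exists_rank_one_factorization n a p q c hn' (by omega) hac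
    -- `(y, -x)` is the top row completing `(γ, δ)`, and `k` is the coefficient of `(γ, δ)` in
    -- `(s, t)`.
    obtain ⟨k, hk⟩ : ∃ k, k = y * t + x * s := ⟨_, rfl⟩
    have hst : s * δ - t * γ = n := by linarith
    have hmod : k % n + n * (k / n) = k := Int.emod_add_mul_ediv k n
    have hlt := Int.emod_lt_of_pos k hn'
    have hnn := Int.emod_nonneg k hn'.ne'
    obtain ⟨j, hj⟩ := Int.eq_ofNat_of_zero_le hnn
    rw [hj] at hmod hlt
    obtain ⟨m, hm⟩ : ∃ m, m = k / n := ⟨_, rfl⟩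
    rw [← hm] at hmod
    have hs : n * (y + m * γ) + j * γ = s := by
      linear_combination γ * hmod + γ * hk - y * hst + s * hxy
    have ht : n * (-x + m * δ) + j * δ = t := by
      linear_combination δ * hmod + δ * hk + x * hst + t * hxy
    refine ⟨j, by exact_mod_cast hlt,
      ⟨!![y + m * γ, -x + m * δ; γ, δ], by
        rw [Matrix.det_fin_two_of]; linear_combination hxy⟩, ?_⟩
    simp only [formAct, Prod.mk.injEq, Matrix.of_apply,
      Matrix.cons_val', Matrix.cons_val_zero, Matrix.cons_val_one, Matrix.cons_val_fin_one]
    have hb : p + q = b := by omega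
    refine ⟨?_, ?_, ?_⟩
    · linear_combination γ * hs - h1
    · linear_combination δ * hs + γ * ht - h2 - h3 + hb
    · linear_combination δ * ht - h4
  · rintro j j' ⟨hj, g, hg⟩ ⟨hj', g', hg'⟩
    obtain ⟨α, β, γ, δ, hd, h1, h2, h3, h4⟩ := factorization_of_formAct_eq n j a b c p q hp hq g hg
    obtain ⟨α', β', γ', δ', hd', h1', h2', h3', h4'⟩ :=
      factorization_of_formAct_eq n j' a b c p q hp hq g' hg'
    have hdvd := dvd_sub_of_factorizations hn' hd hd' (h1.symm.trans h1') (h2.symm.trans h2')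
      (h3.symm.trans h3') (h4.symm.trans h4')
    have := Int.eq_zero_of_abs_lt_dvd hdvd (by rw [abs_lt]; omega)
    omega
end

section
/- Let n be a positive integer and let Ṽ(ℤ) = {(a,b,c) ∈ ℚ³ : b ∈ ℤ, 2a ∈ ℤ, 2c ∈ ℤ, a + c ∈ ℤ, b² − 4ac = n²}. Then every element of Ṽ(ℤ) lies in the Γ₂-orbit of exactly one of the following 4n triples: (0, n, j) for 0 ≤ j < 2n, and (n + j/2, n + j, j/2) for 0 ≤ j < 2n. -/
/-!
A form `Q` of discriminant `n²` with `n > 0` splits over `ℚ`, and the sign of `n` orders its two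
linear factors.  Concretely, one writes `2Q = L · (2n K + t L)` with `L = γx + δy` primitive and
`K = αx + βy` chosen so that `αδ - βγ = 1`.  Here `L` is the primitive vector proportional to the rows of the
rank-one matrix `(A, B + n; B - n, C)`, where `(A, B, C) = (2a, b, 2c)`; so `L` is unique up to
sign, `K` is unique up to adding `kL`, and such a change moves `t` by `2nk`
(`exists_splitting`, `IsSplitting.unique`).

The group `Γ₂` has two orbits on primitive vectors up to sign, according to whether `γ` and `δ` are
both odd.  If they are not, `(K, L)` can be taken in `Γ₂`; this forces `k` to be even and, by
integrality of `a + c`, `t = 2j` is even, so the invariant is `j` modulo `2n`.  If both are odd,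
`(K, L - K)` is automatically in `Γ₂`, and the invariant is `t` modulo `2n`.  These are the two
families of representatives (`orbit_inl_iff`, `orbit_inr_iff`).
-/

/-- Membership in `Γ₂`: the subgroup of `SL₂(ℤ)` of matrices congruent mod 2 to the
identity `I` or to `σ = (0, 1; −1, 0)`. -/
def memGamma2 (g : Matrix.SpecialLinearGroup (Fin 2) ℤ) : Prop :=
  (Odd (g 0 0) ∧ Even (g 0 1) ∧ Even (g 1 0) ∧ Odd (g 1 1)) ∨
  (Even (g 0 0) ∧ Odd (g 0 1) ∧ Odd (g 1 0) ∧ Even (g 1 1))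

/-- The right action of `g = (α, β; γ, δ) ∈ SL₂(ℤ)` on a rational triple `(a,b,c)`,
corresponding to the substitution action `Q ↦ Q ∘ gᵗ` on `Q = ax² + bxy + cy²`. -/
def formActQ (v : ℚ × ℚ × ℚ) (g : Matrix.SpecialLinearGroup (Fin 2) ℤ) : ℚ × ℚ × ℚ :=
  (v.1 * (g 0 0 : ℚ) ^ 2 + v.2.1 * (g 0 0 : ℚ) * (g 1 0 : ℚ) + v.2.2 * (g 1 0 : ℚ) ^ 2,
   2 * v.1 * (g 0 0 : ℚ) * (g 0 1 : ℚ)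
     + v.2.1 * ((g 0 0 : ℚ) * (g 1 1 : ℚ) + (g 0 1 : ℚ) * (g 1 0 : ℚ))
     + 2 * v.2.2 * (g 1 0 : ℚ) * (g 1 1 : ℚ),
   v.1 * (g 0 1 : ℚ) ^ 2 + v.2.1 * (g 0 1 : ℚ) * (g 1 1 : ℚ) + v.2.2 * (g 1 1 : ℚ) ^ 2)

/-- The `4n` representative triples: `(0, n, j)` for `0 ≤ j < 2n` (indexed by `Sum.inl j`)
and `(n + j/2, n + j, j/2)` for `0 ≤ j < 2n` (indexed by `Sum.inr j`). -/
def repTriple (n : ℕ) : Fin (2 * n) ⊕ Fin (2 * n) → ℚ × ℚ × ℚ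
  | .inl j => (0, (n : ℚ), (j : ℚ))
  | .inr j => ((n : ℚ) + (j : ℚ) / 2, (n : ℚ) + (j : ℚ), (j : ℚ) / 2)

/-! ### Splittings into linear factors -/

/-- `(A, B, C)` are the coefficients of `2Q = Ax² + 2Bxy + Cy² = L (2n K + t L)`, where
`K = αx + βy` and `L = γx + δy` have determinant one. -/
def IsSplitting (n A B C α β γ δ t : ℤ) : Prop :=
  α * δ - β * γ = 1 ∧ A = γ * (2 * n * α + t * γ) ∧
    B = n * (α * δ + β * γ) + t * γ * δ ∧ C = δ * (2 * n * β + t * δ)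

/-- Replacing `K` by `K + kL` moves `t` by `-2nk`. -/
lemma IsSplitting.shift {n A B C α β γ δ t : ℤ} (h : IsSplitting n A B C α β γ δ t) (k : ℤ) :
    IsSplitting n A B C (α + k * γ) (β + k * δ) γ δ (t - 2 * n * k) := by
  obtain ⟨h1, h2, h3, h4⟩ := h
  refine ⟨?_, ?_, ?_, ?_⟩
  · linear_combination h1
  · linear_combination h2
  · linear_combination h3
  · linear_combination h4

/-- A singular `2 × 2` integer matrix is a column times a primitive row. -/
lemma exists_primitive_row {x y z w : ℤ} (hdet : x * w = y * z) :
    ∃ p q γ δ : ℤ, IsCoprime γ δ ∧ x = p * γ ∧ y = p * δ ∧ z = q * γ ∧ w = q * δ := by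
  by_cases h : x = 0 ∧ y = 0
  · obtain ⟨rfl, rfl⟩ := h
    by_cases h' : z = 0 ∧ w = 0
    · obtain ⟨rfl, rfl⟩ := h'
      exact ⟨0, 0, 1, 0, isCoprime_one_left, by simp⟩
    · have hg : 0 < Int.gcd z w := Int.gcd_pos_iff.2 (by tauto)
      obtain ⟨γ, δ, hc, hz, hw⟩ := Int.exists_gcd_one hg
      exact ⟨0, Int.gcd z w, γ, δ, Int.isCoprime_iff_gcd_eq_one.2 hc, by simp, by simp,
        by linarith, by linarith⟩
  · have hg : 0 < Int.gcd x y := Int.gcd_pos_iff.2 (by tauto)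
    obtain ⟨γ, δ, hc, hx, hy⟩ := Int.exists_gcd_one hg
    obtain ⟨u, v, huv⟩ := Int.isCoprime_iff_gcd_eq_one.2 hc
    have hg0 : (Int.gcd x y : ℤ) ≠ 0 := by positivity
    have hpar : γ * w = δ * z := by
      refine mul_right_cancel₀ hg0 ?_
      linear_combination hdet - w * hx + z * hy
    refine ⟨Int.gcd x y, u * z + v * w, γ, δ, Int.isCoprime_iff_gcd_eq_one.2 hc,
      by linarith, by linarith, ?_, ?_⟩
    · linear_combination -z * huv - v * hpar
    · linear_combination -w * huv + u * hpar

lemma exists_splitting {n A B C : ℤ} (hd : B ^ 2 - A * C = n ^ 2) :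
    ∃ α β γ δ t : ℤ, IsSplitting n A B C α β γ δ t := by
  obtain ⟨p, q, γ, δ, ⟨u, v, huv⟩, h1, h2, h3, h4⟩ :=
    exists_primitive_row (x := A) (y := B + n) (z := B - n) (w := C) (by linear_combination -hd)
  have hn : 2 * n = p * δ - q * γ := by linarith
  refine ⟨v, -u, γ, δ, v * q + u * p, by linarith, ?_, ?_, ?_⟩
  · linear_combination h1 - v * γ * hn - p * γ * huv
  · have : 2 * B = p * δ + q * γ := by linarith
    refine mul_left_cancel₀ (two_ne_zero (α := ℤ)) ?_
    linear_combination this - (v * δ - u * γ) * hn - (p * δ + q * γ) * huv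
  · linear_combination h4 + u * δ * hn - q * δ * huv

/-- The factor `L` is unique up to a sign `ε`, and then `K` and `t` are unique up to a shift. -/
lemma IsSplitting.unique {n A B C α β γ δ t α' β' γ' δ' t' : ℤ} (hn : n ≠ 0)
    (h : IsSplitting n A B C α β γ δ t) (h' : IsSplitting n A B C α' β' γ' δ' t') :
    ∃ ε k : ℤ, (ε = 1 ∨ ε = -1) ∧ γ' = ε * γ ∧ δ' = ε * δ ∧ α' = ε * α + k * γ ∧
      β' = ε * β + k * δ ∧ t' = t - 2 * n * (ε * k) := by
  obtain ⟨d, hA, hB, hC⟩ := h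
  obtain ⟨d', hA', hB', hC'⟩ := h'
  obtain ⟨p, hp⟩ : ∃ p, p = 2 * n * α + t * γ := ⟨_, rfl⟩
  obtain ⟨q, hq⟩ : ∃ q, q = 2 * n * β + t * δ := ⟨_, rfl⟩
  obtain ⟨p', hp'⟩ : ∃ p, p = 2 * n * α' + t' * γ' := ⟨_, rfl⟩
  obtain ⟨q', hq'⟩ : ∃ q, q = 2 * n * β' + t' * δ' := ⟨_, rfl⟩
  -- The rows of `(A, B + n; B - n, C)`, expressed through both splittings.
  have e1 : p * γ = p' * γ' := by rw [hp, hp']; linarith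
  have e2 : p * δ = p' * δ' := by
    rw [hp, hp']; linear_combination hB' - hB + n * d - n * d'
  have e3 : q * γ = q' * γ' := by
    rw [hq, hq']; linear_combination hB' - hB - n * d + n * d'
  have e4 : q * δ = q' * δ' := by rw [hq, hq']; linarith
  have dn : p * δ - q * γ = 2 * n := by rw [hp, hq]; linear_combination 2 * n * d
  have dn' : p' * δ' - q' * γ' = 2 * n := by rw [hp', hq']; linear_combination 2 * n * d'
  have par : γ * δ' - δ * γ' = 0 := by
    have : (2 * n) * (γ * δ' - δ * γ') = 0 := by
      rw [← dn']
      linear_combination δ' * (δ * e1 - γ * e2) - γ' * (δ * e3 - γ * e4)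
    exact (mul_eq_zero.1 this).resolve_left (by simpa using hn)
  obtain ⟨ε, hε⟩ : ∃ ε, ε = α * δ' - β * γ' := ⟨_, rfl⟩
  have g1 : γ' = ε * γ := by rw [hε]; linear_combination -γ' * d - α * par
  have g2 : δ' = ε * δ := by rw [hε]; linear_combination -δ' * d - β * par
  have hu : ε * (α' * δ - β' * γ) = 1 := by
    rw [← d', g1, g2]; ring
  have hε1 : ε = 1 ∨ ε = -1 := Int.isUnit_iff.1 (IsUnit.of_mul_eq_one _ hu)
  have hεε : ε * ε = 1 := by rcases hε1 with h | h <;> simp [h]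
  have hdε : α' * δ - β' * γ = ε := by
    linear_combination ε * hu - (α' * δ - β' * γ) * hεε
  have a1 : α' = ε * α + (α * β' - β * α') * γ := by
    linear_combination -α' * d + α * hdε
  have b1 : β' = ε * β + (α * β' - β * α') * δ := by
    linear_combination -β' * d + β * hdε
  refine ⟨ε, α * β' - β * α', hε1, g1, g2, a1, b1, ?_⟩
  have pp : p' = ε * p := by
    have : ε * p' = p := by
      linear_combination β * (p' * g1 + e1) - α * (p' * g2 + e2) + (p - ε * p') * d
    rw [← this]; linear_combination -p' * hεε
  have qq : q' = ε * q := by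
    have : ε * q' = q := by
      linear_combination β * (q' * g1 + e3) - α * (q' * g2 + e4) + (q - ε * q') * d
    rw [← this]; linear_combination -q' * hεε
  have ht : t = α * q - β * p := by rw [hp, hq]; linear_combination -t * d
  have ht' : t' = α' * q' - β' * p' := by rw [hp', hq']; linear_combination -t' * d'
  rw [ht', ht, pp, qq]
  generalize α * β' - β * α' = k at a1 b1
  rw [a1, b1]
  linear_combination (α * q - β * p) * hεε - ε * k * dn

/-! ### Splittings and orbits of the representatives -/

/-- For `(0, n, j)` one has `2Q = y (2n x + 2j y)`, so its `Γ₂`-orbit consists of the splittings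
with `t = 2j` whose matrix `(K, L)` lies in `Γ₂`. -/
lemma orbit_inl_iff {n : ℕ} {v : ℚ × ℚ × ℚ} {A B C : ℤ} (hA : 2 * v.1 = A) (hB : v.2.1 = B)
    (hC : 2 * v.2.2 = C) (j : Fin (2 * n)) :
    (∃ g, memGamma2 g ∧ formActQ (repTriple n (.inl j)) g = v) ↔
      ∃ α β γ δ : ℤ, IsSplitting n A B C α β γ δ (2 * (j : ℕ)) ∧
        ((Odd α ∧ Even β ∧ Even γ ∧ Odd δ) ∨ (Even α ∧ Odd β ∧ Odd γ ∧ Even δ)) := by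
  obtain ⟨a, b, c⟩ := v
  simp only at hA hB hC
  constructor
  · rintro ⟨g, hg, h⟩
    refine ⟨g 0 0, g 0 1, g 1 0, g 1 1, ?_, hg⟩
    simp only [formActQ, repTriple, Prod.mk.injEq] at h
    obtain ⟨h1, h2, h3⟩ := h
    refine ⟨?_, ?_, ?_, ?_⟩
    · rw [← Matrix.det_fin_two]; exact g.2
    · have : (A : ℚ) = ((g 1 0 : ℤ) : ℚ) * (2 * n * (g 0 0 : ℤ) + 2 * j * (g 1 0 : ℤ)) := by
        rw [← hA, ← h1]; ring
      exact_mod_cast this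
    · have : (B : ℚ) = n * (((g 0 0 : ℤ) : ℚ) * (g 1 1 : ℤ) + (g 0 1 : ℤ) * (g 1 0 : ℤ))
          + 2 * j * (g 1 0 : ℤ) * (g 1 1 : ℤ) := by
        rw [← hB, ← h2]; ring
      exact_mod_cast this
    · have : (C : ℚ) = ((g 1 1 : ℤ) : ℚ) * (2 * n * (g 0 1 : ℤ) + 2 * j * (g 1 1 : ℤ)) := by
        rw [← hC, ← h3]; ring
      exact_mod_cast this
  · rintro ⟨α, β, γ, δ, ⟨h1, h2, h3, h4⟩, hm⟩
    refine ⟨⟨!![α, β; γ, δ], by rw [Matrix.det_fin_two_of]; exact h1⟩, hm, ?_⟩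
    have h2' : (A : ℚ) = _ := congrArg _ h2
    have h3' : (B : ℚ) = _ := congrArg _ h3
    have h4' : (C : ℚ) = _ := congrArg _ h4
    push_cast at h2' h3' h4'
    simp [formActQ, repTriple]
    refine ⟨?_, ?_, ?_⟩
    · linarith
    · linarith
    · linarith

/-- For `(n + j/2, n + j, j/2)` one has `2Q = (x + y) (2n x + j (x + y))`, so a matrix with rows
`K` and `L - K` carries it to the splitting `(K, L)` with `t = j`. -/
lemma orbit_inr_iff {n : ℕ} {v : ℚ × ℚ × ℚ} {A B C : ℤ} (hA : 2 * v.1 = A) (hB : v.2.1 = B)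
    (hC : 2 * v.2.2 = C) (j : Fin (2 * n)) :
    (∃ g, memGamma2 g ∧ formActQ (repTriple n (.inr j)) g = v) ↔
      ∃ α β γ δ : ℤ, IsSplitting n A B C α β γ δ (j : ℕ) ∧ Odd γ ∧ Odd δ := by
  obtain ⟨a, b, c⟩ := v
  simp only at hA hB hC
  constructor
  · rintro ⟨g, hg, h⟩
    refine ⟨g 0 0, g 0 1, g 0 0 + g 1 0, g 0 1 + g 1 1, ?_, ?_⟩
    · simp only [formActQ, repTriple, Prod.mk.injEq] at h
      obtain ⟨h1, h2, h3⟩ := h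
      have hdet := g.2
      rw [Matrix.det_fin_two] at hdet
      refine ⟨by linarith, ?_, ?_, ?_⟩
      · have : (A : ℚ) = ((g 0 0 : ℤ) + (g 1 0 : ℤ) : ℚ)
            * (2 * n * (g 0 0 : ℤ) + j * ((g 0 0 : ℤ) + (g 1 0 : ℤ))) := by
          rw [← hA, ← h1]; ring
        exact_mod_cast this
      · have : (B : ℚ) = n * (((g 0 0 : ℤ) : ℚ) * ((g 0 1 : ℤ) + (g 1 1 : ℤ))
            + (g 0 1 : ℤ) * ((g 0 0 : ℤ) + (g 1 0 : ℤ)))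
            + j * ((g 0 0 : ℤ) + (g 1 0 : ℤ)) * ((g 0 1 : ℤ) + (g 1 1 : ℤ)) := by
          rw [← hB, ← h2]; ring
        exact_mod_cast this
      · have : (C : ℚ) = ((g 0 1 : ℤ) + (g 1 1 : ℤ) : ℚ)
            * (2 * n * (g 0 1 : ℤ) + j * ((g 0 1 : ℤ) + (g 1 1 : ℤ))) := by
          rw [← hC, ← h3]; ring
        exact_mod_cast this
    · rcases hg with ⟨h1, h2, h3, h4⟩ | ⟨h1, h2, h3, h4⟩
      · exact ⟨h1.add_even h3, h2.add_odd h4⟩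
      · exact ⟨h1.add_odd h3, h2.add_even h4⟩
  · rintro ⟨α, β, γ, δ, ⟨h1, h2, h3, h4⟩, hγ, hδ⟩
    refine ⟨⟨!![α, β; γ - α, δ - β], by rw [Matrix.det_fin_two_of]; linarith⟩, ?_, ?_⟩
    ·
      -- With `γ` and `δ` odd, the determinant forces `α` and `β` to have opposite parities.
      have hodd : Odd (α * δ - β * γ) := by rw [h1]; exact odd_one
      simp only [memGamma2, Matrix.of_apply, Matrix.cons_val]
      clear h1 h2 h3 h4 hA hB hC
      simp only [← Int.not_odd_iff_even, Int.odd_sub, Int.odd_mul] at hodd ⊢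
      tauto
    · have h2' : (A : ℚ) = _ := congrArg _ h2
      have h3' : (B : ℚ) = _ := congrArg _ h3
      have h4' : (C : ℚ) = _ := congrArg _ h4
      push_cast at h2' h3' h4'
      simp [formActQ, repTriple]
      refine ⟨?_, ?_, ?_⟩
      · linarith
      · linarith
      · linarith

/-! ### Classification -/

lemma fin_eq_of_modEq {n : ℕ} (i j : Fin (2 * n)) (m : ℤ)
    (h : ((j : ℕ) : ℤ) = (i : ℕ) - 2 * n * m) : i = j := by
  have hi := i.2
  have hj := j.2
  have : ((j : ℕ) : ℤ) % (2 * n) = ((i : ℕ) : ℤ) % (2 * n) := by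
    rw [h]; exact Int.sub_mul_emod_self_left _ _ _
  rw [Int.emod_eq_of_lt (by omega) (by omega), Int.emod_eq_of_lt (by omega) (by omega)] at this
  ext; omega

lemma exists_fin_sub {n : ℕ} (hn : 0 < n) (t : ℤ) :
    ∃ (j : Fin (2 * n)) (k : ℤ), ((j : ℕ) : ℤ) = t - 2 * n * k := by
  have h0 : 0 ≤ t % (2 * n) := Int.emod_nonneg _ (by omega)
  have h1 : t % (2 * n) < 2 * n := Int.emod_lt_of_pos _ (by omega)
  refine ⟨⟨(t % (2 * n)).toNat, by omega⟩, t / (2 * n), ?_⟩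
  rw [Int.toNat_of_nonneg h0, Int.emod_def]

/-- Every `(a,b,c) ∈ ℚ³` with `b ∈ ℤ`, `2a ∈ ℤ`, `2c ∈ ℤ`, `a + c ∈ ℤ` and
`b² − 4ac = n²` lies in the `Γ₂`-orbit of exactly one of the `4n` triples `(0, n, j)`,
`(n + j/2, n + j, j/2)` for `0 ≤ j < 2n`. -/
theorem orbit_classification_Gamma2 (n : ℕ) (hn : 0 < n) (v : ℚ × ℚ × ℚ)
    (hb : ∃ m : ℤ, v.2.1 = (m : ℚ)) (ha : ∃ m : ℤ, 2 * v.1 = (m : ℚ))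
    (hc : ∃ m : ℤ, 2 * v.2.2 = (m : ℚ)) (hac : ∃ m : ℤ, v.1 + v.2.2 = (m : ℚ))
    (hd : v.2.1 ^ 2 - 4 * v.1 * v.2.2 = (n : ℚ) ^ 2) :
    ∃! i : Fin (2 * n) ⊕ Fin (2 * n), ∃ g : Matrix.SpecialLinearGroup (Fin 2) ℤ,
      memGamma2 g ∧ formActQ (repTriple n i) g = v := by
  obtain ⟨B, hB⟩ := hb
  obtain ⟨A, hA⟩ := ha
  obtain ⟨C, hC⟩ := hc
  obtain ⟨S, hS⟩ := hac
  have hAC : A + C = 2 * S := by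
    have : (A + C : ℚ) = 2 * S := by rw [← hA, ← hC, ← hS]; ring
    exact_mod_cast this
  have hdisc : B ^ 2 - A * C = (n : ℤ) ^ 2 := by
    have : (B ^ 2 - A * C : ℚ) = (n : ℚ) ^ 2 := by rw [← hA, ← hB, ← hC, ← hd]; ring
    exact_mod_cast this
  have hn0 : (n : ℤ) ≠ 0 := by omega
  refine existsUnique_of_exists_of_unique ?_ ?_
  · obtain ⟨α, β, γ, δ, t, h⟩ := exists_splitting hdisc
    by_cases hodd : Odd γ ∧ Odd δ
    · obtain ⟨j, k, hj⟩ := exists_fin_sub hn t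
      refine ⟨.inr j, (orbit_inr_iff hA hB hC j).2 ⟨α + k * γ, β + k * δ, γ, δ, ?_, hodd⟩⟩
      rw [hj]
      exact h.shift k
    ·
      -- Integrality of `a + c` forces `t` to be even.
      obtain ⟨s, rfl⟩ : Even t := by
        have hev : Even (t * (γ * γ + δ * δ)) :=
          ⟨S - n * (α * γ + β * δ), by
            linear_combination hAC - h.2.1 - h.2.2.2⟩
        have h1 : Odd (α * δ - β * γ) := by rw [h.1]; exact odd_one
        clear h
        rw [← Int.not_odd_iff_even]
        simp only [← Int.not_odd_iff_even, Int.odd_sub, Int.odd_add, Int.odd_mul] at hev h1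
        tauto
      -- A first shift puts `(K, L)` in `Γ₂`, a second one, by an even multiple, reduces `j`.
      obtain ⟨k₀, hk₀⟩ : ∃ k : ℤ,
          (Odd (α + k * γ) ∧ Even (β + k * δ) ∧ Even γ ∧ Odd δ) ∨
            (Even (α + k * γ) ∧ Odd (β + k * δ) ∧ Odd γ ∧ Even δ) := by
        have h1 : Odd (α * δ - β * γ) := by rw [h.1]; exact odd_one
        clear h
        by_cases hγ : Odd γ
        · refine ⟨α, ?_⟩
          simp only [← Int.not_odd_iff_even, Int.odd_sub, Int.odd_add, Int.odd_mul] at h1 ⊢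
          tauto
        · refine ⟨β, ?_⟩
          simp only [← Int.not_odd_iff_even, Int.odd_sub, Int.odd_add, Int.odd_mul] at h1 ⊢
          tauto
      obtain ⟨j, k, hj⟩ := exists_fin_sub hn (s - n * k₀)
      refine ⟨.inl j, (orbit_inl_iff hA hB hC j).2
        ⟨α + k₀ * γ + 2 * k * γ, β + k₀ * δ + 2 * k * δ, γ, δ, ?_, ?_⟩⟩
      swap
      · simpa only [mul_assoc, Int.odd_add (m := α + k₀ * γ), Int.even_add (m := α + k₀ * γ),
          Int.odd_add (m := β + k₀ * δ), Int.even_add (m := β + k₀ * δ), even_two_mul,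
          iff_true] using hk₀
      have := (h.shift k₀).shift (2 * k)
      rw [hj]
      convert this using 1
      ring
  · rintro (i | i) (j | j) hi hj
    · obtain ⟨α, β, γ, δ, h, hp⟩ := (orbit_inl_iff hA hB hC i).1 hi
      obtain ⟨α', β', γ', δ', h', hp'⟩ := (orbit_inl_iff hA hB hC j).1 hj
      obtain ⟨ε, k, hε, rfl, rfl, rfl, rfl, ht⟩ := h.unique hn0 h'
      have hk : Even k := by
        have hεo : Odd ε := by rcases hε with rfl | rfl <;> decide
        clear h h' ht hε hi hj
        simp only [← Int.not_odd_iff_even, Int.odd_add, Int.odd_mul] at hp hp' ⊢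
        tauto
      obtain ⟨m, rfl⟩ := hk
      rw [fin_eq_of_modEq i j (ε * m) (by linarith)]
    · obtain ⟨α, β, γ, δ, h, hp⟩ := (orbit_inl_iff hA hB hC i).1 hi
      obtain ⟨α', β', γ', δ', h', hp'⟩ := (orbit_inr_iff hA hB hC j).1 hj
      obtain ⟨ε, k, hε, rfl, rfl, -⟩ := h.unique hn0 h'
      simp only [← Int.not_odd_iff_even, Int.odd_mul] at hp hp'
      tauto
    · obtain ⟨α, β, γ, δ, h, hp⟩ := (orbit_inr_iff hA hB hC i).1 hi
      obtain ⟨α', β', γ', δ', h', hp'⟩ := (orbit_inl_iff hA hB hC j).1 hj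
      obtain ⟨ε, k, hε, rfl, rfl, -⟩ := h'.unique hn0 h
      simp only [← Int.not_odd_iff_even, Int.odd_mul] at hp hp'
      tauto
    · obtain ⟨α, β, γ, δ, h, -⟩ := (orbit_inr_iff hA hB hC i).1 hi
      obtain ⟨α', β', γ', δ', h', -⟩ := (orbit_inr_iff hA hB hC j).1 hj
      obtain ⟨ε, k, -, -, -, -, -, ht⟩ := h.unique hn0 h'
      rw [fin_eq_of_modEq i j (ε * k) ht]
end

section
/- Let (a,b,c) ∈ ℤ³ and let n be a nonnegative integer. Then b² − 4ac = n² if and only if there exist integers A, B, C, D with a = AC, b = AD + BC, c = BD and AD − BC = n. Equivalently, an integral binary quadratic form ax² + bxy + cy² has discriminant equal to a perfect square n² exactly when it factors as a product (Ax + By)(Cx + Dy) of integral linear forms with AD − BC = n. -/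
/-!
With `p = (b + n) / 2` and `q = (b - n) / 2`, which are integers since `b` and `n` have the same
parity, the discriminant condition reads `a * c = p * q`. The factorization asks for
`a = A * C`, `c = B * D`, `p = A * D`, `q = B * C`, that is, for a common refinement of two
factorizations of one integer; `exists_common_refinement` supplies it, because `ℤ` is a
GCD domain.
-/

/-- The four-number lemma: two factorizations of the same integer have a common refinement. -/
theorem exists_common_refinement {a c p q : ℤ} (h : a * c = p * q) :
    ∃ A B C D : ℤ, a = A * C ∧ c = B * D ∧ p = A * D ∧ q = B * C := by
  by_cases ha : a = 0
  · -- Here `c` is not determined by the other three numbers, so the factors are given explicitly.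
    subst ha
    rcases mul_eq_zero.mp (h.symm.trans (zero_mul c)) with rfl | rfl
    · exact ⟨0, 1, q, c, by simp⟩
    · exact ⟨p, c, 0, 1, by simp⟩
  · obtain ⟨A, C, ⟨D, rfl⟩, ⟨B, rfl⟩, rfl⟩ := exists_dvd_and_dvd_of_dvd_mul (Dvd.intro c h)
    refine ⟨A, B, C, D, rfl, mul_left_cancel₀ ha ?_, rfl, mul_comm C B⟩
    linear_combination h


/-- An integral binary quadratic form `ax² + bxy + cy²` has discriminant `b² − 4ac` equal to
a perfect square `n²` if and only if it factors as a product `(Ax + By)(Cx + Dy)` of integral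
linear forms with `AD − BC = n`; that is, `a = AC`, `b = AD + BC`, `c = BD`. -/
theorem square_disc_iff_factors (a b c : ℤ) (n : ℕ) :
    b ^ 2 - 4 * a * c = (n : ℤ) ^ 2 ↔
      ∃ A B C D : ℤ, a = A * C ∧ b = A * D + B * C ∧ c = B * D ∧ A * D - B * C = (n : ℤ) := by
  constructor
  · intro h
    have hpar : Even (b - n) := by
      have h2 : Even (b ^ 2 - (n : ℤ) ^ 2) := ⟨2 * a * c, by linear_combination h⟩
      simpa [Int.even_sub, Int.even_pow] using h2
    -- `q = (b - n) / 2`, so that `(b + n) / 2 = q + n`.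
    obtain ⟨q, hq⟩ := hpar
    obtain rfl : b = 2 * q + n := by linear_combination hq
    have hac : a * c = (q + n) * q := by linarith
    obtain ⟨A, B, C, D, h₁, h₂, h₃, h₄⟩ := exists_common_refinement hac
    exact ⟨A, B, C, D, h₁, by linear_combination h₃ + h₄, h₂, by linear_combination h₄ - h₃⟩
  · rintro ⟨A, B, C, D, rfl, rfl, rfl, h⟩
    rw [← h]
    ring
end

section
/- Let T ≥ 1 be real and let 0 < δ ≤ 1/8. If g ∈ SL₂(ℝ) satisfies g·i ∈ C_T, then for every h ∈ B_δ one has gh·i ∈ C_{T(1+4δ)}. -/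
/-!
Write `g = (a, b; c, d)`. Then `Re (g·i) / Im (g·i) = ac + bd` is the inner product of the rows of
`g`, so `g·i ∈ C_T` means `|ac + bd| ≤ T` (`smul_I_mem_cone_iff`). For `h = k_θ a_y k_φ`, the
rotation `k_φ` on the right preserves the inner product of the rows. If `(u₁, u₂)` and `(v₁, v₂)`
are the rows of `g k_θ`, the ratio for `g h` is therefore `y u₁v₁ + y⁻¹ u₂v₂`, which with
`L = log y` and `p = u₁v₁ + u₂v₂` equals `p cosh L + (u₁v₁ - u₂v₂) sinh L`.
From `u₁v₂ - u₂v₁ = 1` one gets `(u₁v₁ - u₂v₂)² ≤ p² + 1 ≤ 2T²`, and elementary bounds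
for `exp (± L)` finish the proof.
-/

open Real

/-- The cone `C_T = {z ∈ ℍ : |Re z| ≤ T · Im z}`. -/
def cone (T : ℝ) : Set UpperHalfPlane := {z | |z.re| ≤ T * z.im}

/-- The rotation matrix `k_θ = (cos θ, sin θ; −sin θ, cos θ)`. -/
noncomputable def kMat (θ : ℝ) : Matrix (Fin 2) (Fin 2) ℝ :=
  !![Real.cos θ, Real.sin θ; -Real.sin θ, Real.cos θ]

/-- The diagonal matrix `diag(y^{1/2}, y^{−1/2})`. -/
noncomputable def aMat (y : ℝ) : Matrix (Fin 2) (Fin 2) ℝ :=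
  !![Real.sqrt y, 0; 0, (Real.sqrt y)⁻¹]

/-- The spherical `δ`-neighborhood of the identity `B_δ = K A_δ K ⊂ SL₂(ℝ)`, where
`A_δ = {diag(y^{1/2}, y^{−1/2}) : y > 0, |log y| < δ}`. -/
def BNbhd (δ : ℝ) : Set (Matrix.SpecialLinearGroup (Fin 2) ℝ) :=
  {g | ∃ θ φ y : ℝ, 0 < y ∧ |Real.log y| < δ ∧
    (g : Matrix (Fin 2) (Fin 2) ℝ) = kMat θ * aMat y * kMat φ}

theorem smul_I_mem_cone_iff (T : ℝ) (g : Matrix.SpecialLinearGroup (Fin 2) ℝ) :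
    g • UpperHalfPlane.I ∈ cone T ↔ |g 0 0 * g 1 0 + g 0 1 * g 1 1| ≤ T := by
  have hdet : g 0 0 * g 1 1 - g 0 1 * g 1 0 = 1 := by
    rw [← Matrix.det_fin_two]; exact g.det_coe
  have hD : 0 < g 1 0 ^ 2 + g 1 1 ^ 2 := by
    by_contra! hle
    have h0 : g 1 0 = 0 := by nlinarith [sq_nonneg (g 1 0), sq_nonneg (g 1 1)]
    have h1 : g 1 1 = 0 := by nlinarith [sq_nonneg (g 1 0), sq_nonneg (g 1 1)]
    simp [h0, h1] at hdet
  have hz : ((g • UpperHalfPlane.I : UpperHalfPlane) : ℂ) =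
      (g 0 0 * Complex.I + g 0 1) / (g 1 0 * Complex.I + g 1 1) := by
    rw [UpperHalfPlane.specialLinearGroup_apply]
    simp
  have hre : (g • UpperHalfPlane.I).re =
      (g 0 0 * g 1 0 + g 0 1 * g 1 1) / (g 1 0 ^ 2 + g 1 1 ^ 2) := by
    rw [← UpperHalfPlane.coe_re, hz]
    simp [Complex.div_re, Complex.normSq_apply]
    ring
  have him : (g • UpperHalfPlane.I).im = 1 / (g 1 0 ^ 2 + g 1 1 ^ 2) := by
    rw [← UpperHalfPlane.coe_im, hz]
    simp [Complex.div_im, Complex.normSq_apply]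
    ring_nf
    linear_combination (g 1 0 ^ 2 + g 1 1 ^ 2)⁻¹ * hdet
  simp only [cone, Set.mem_ofPred_eq, hre, him, abs_div, abs_of_pos hD, mul_one_div]
  exact div_le_div_iff_of_pos_right hD

/-- If the rows of `(u₁, u₂; v₁, v₂)`, a matrix of determinant one, have inner product at most
`T ≥ 1` in absolute value, then rescaling the columns by `y^{1/2}` and `y^{-1/2}`, `|log y| < δ`,
worsens this bound by a factor at most `1 + 4δ`. -/
theorem abs_scaled_inner_le {T δ : ℝ} (hT : 1 ≤ T) (hδ : δ ≤ 1 / 8) {u₁ u₂ v₁ v₂ y : ℝ}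
    (hy : 0 < y) (hL : |Real.log y| < δ) (hdet : u₁ * v₂ - u₂ * v₁ = 1)
    (hp : |u₁ * v₁ + u₂ * v₂| ≤ T) :
    |y * (u₁ * v₁) + y⁻¹ * (u₂ * v₂)| ≤ T * (1 + 4 * δ) := by
  set L := Real.log y with hLdef
  have hL1 : |L| ≤ 1 := by linarith
  have e1 := abs_le.mp (Real.abs_exp_sub_one_sub_id_le hL1)
  have e2 := abs_le.mp (Real.abs_exp_sub_one_sub_id_le (x := -L) (by rwa [abs_neg]))
  rw [hLdef, Real.exp_log hy, ← hLdef] at e1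
  rw [Real.exp_neg, hLdef, Real.exp_log hy, ← hLdef, neg_sq] at e2
  have hLδ := abs_lt.mp hL
  have hδ0 : 0 < δ := (abs_nonneg L).trans_lt hL
  have hsq : L ^ 2 ≤ δ / 8 := by nlinarith [abs_nonneg L, sq_abs L]
  have hyy : y * y⁻¹ = 1 := mul_inv_cancel₀ hy.ne'
  have hc : |(y + y⁻¹) / 2| ≤ 1 + δ / 8 := by
    rw [abs_le]; constructor <;> linarith
  have hs : |(y - y⁻¹) / 2| ≤ 9 / 8 * δ := by
    rw [abs_le]; constructor <;> linarith
  have hm : |u₁ * v₁ - u₂ * v₂| ≤ 3 / 2 * T := by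
    apply abs_le_of_sq_le_sq _ (by linarith)
    have hp2 : (u₁ * v₁ + u₂ * v₂) ^ 2 ≤ T ^ 2 := sq_le_sq' (abs_le.mp hp).1 (abs_le.mp hp).2
    -- `p² + 1 - (u₁v₁ - u₂v₂)² = (u₁v₂ + u₂v₁)²`, using the determinant condition
    have hkey : (u₁ * v₁ - u₂ * v₂) ^ 2 + (u₁ * v₂ + u₂ * v₁) ^ 2
        = (u₁ * v₁ + u₂ * v₂) ^ 2 + (u₁ * v₂ - u₂ * v₁) ^ 2 := by ring
    rw [hdet] at hkey
    nlinarith [sq_nonneg (u₁ * v₂ + u₂ * v₁)]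
  have hsplit : y * (u₁ * v₁) + y⁻¹ * (u₂ * v₂) =
      (u₁ * v₁ + u₂ * v₂) * ((y + y⁻¹) / 2) + (u₁ * v₁ - u₂ * v₂) * ((y - y⁻¹) / 2) := by ring
  rw [hsplit]
  calc _ ≤ |u₁ * v₁ + u₂ * v₂| * |(y + y⁻¹) / 2|
        + |u₁ * v₁ - u₂ * v₂| * |(y - y⁻¹) / 2| := by
        rw [← abs_mul, ← abs_mul]; exact abs_add_le _ _
    _ ≤ T * (1 + δ / 8) + 3 / 2 * T * (9 / 8 * δ) := by gcongr
    _ ≤ T * (1 + 4 * δ) := by nlinarith [mul_pos (lt_of_lt_of_le one_pos hT) hδ0]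

/-- Well-roundedness of the cones: if `T ≥ 1`, `0 < δ ≤ 1/8`, `g·i ∈ C_T` and `h ∈ B_δ`,
then `gh·i ∈ C_{T(1+4δ)}`. -/
theorem cone_well_rounded (T δ : ℝ) (hT : 1 ≤ T) (hδ0 : 0 < δ) (hδ : δ ≤ 1 / 8)
    (g : Matrix.SpecialLinearGroup (Fin 2) ℝ) (hg : g • UpperHalfPlane.I ∈ cone T)
    (h : Matrix.SpecialLinearGroup (Fin 2) ℝ) (hh : h ∈ BNbhd δ) :
    (g * h) • UpperHalfPlane.I ∈ cone (T * (1 + 4 * δ)) := by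
  obtain ⟨θ, φ, y, hy, hL, hM⟩ := hh
  rw [smul_I_mem_cone_iff] at hg ⊢
  have hdet : g 0 0 * g 1 1 - g 0 1 * g 1 0 = 1 := by
    rw [← Matrix.det_fin_two]; exact g.det_coe
  have hθ := Real.sin_sq_add_cos_sq θ
  have hφ := Real.sin_sq_add_cos_sq φ
  have hr : √y ^ 2 = y := Real.sq_sqrt hy.le
  have hri : (√y)⁻¹ ^ 2 = y⁻¹ := by rw [inv_pow, hr]
  -- `(u₁, u₂)` and `(v₁, v₂)` are the rows of `g * kMat θ`
  obtain ⟨u₁, hu₁⟩ : ∃ u, u = g 0 0 * cos θ - g 0 1 * sin θ := ⟨_, rfl⟩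
  obtain ⟨u₂, hu₂⟩ : ∃ u, u = g 0 0 * sin θ + g 0 1 * cos θ := ⟨_, rfl⟩
  obtain ⟨v₁, hv₁⟩ : ∃ u, u = g 1 0 * cos θ - g 1 1 * sin θ := ⟨_, rfl⟩
  obtain ⟨v₂, hv₂⟩ : ∃ u, u = g 1 0 * sin θ + g 1 1 * cos θ := ⟨_, rfl⟩
  have hdet' : u₁ * v₂ - u₂ * v₁ = 1 := by
    rw [hu₁, hu₂, hv₁, hv₂]
    linear_combination hdet + (g 0 0 * g 1 1 - g 0 1 * g 1 0) * hθ
  have hp : u₁ * v₁ + u₂ * v₂ = g 0 0 * g 1 0 + g 0 1 * g 1 1 := by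
    rw [hu₁, hu₂, hv₁, hv₂]
    linear_combination (g 0 0 * g 1 0 + g 0 1 * g 1 1) * hθ
  have h0 (i : Fin 2) : (g * h) i 0 = (g i 0 * cos θ - g i 1 * sin θ) * √y * cos φ
      - (g i 0 * sin θ + g i 1 * cos θ) * (√y)⁻¹ * sin φ := by
    rw [Matrix.SpecialLinearGroup.coe_mul, hM]
    simp [kMat, aMat, Matrix.mul_apply, Fin.sum_univ_two]
    ring
  have h1 (i : Fin 2) : (g * h) i 1 = (g i 0 * cos θ - g i 1 * sin θ) * √y * sin φ
      + (g i 0 * sin θ + g i 1 * cos θ) * (√y)⁻¹ * cos φ := by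
    rw [Matrix.SpecialLinearGroup.coe_mul, hM]
    simp [kMat, aMat, Matrix.mul_apply, Fin.sum_univ_two]
    ring
  have hE : (g * h) 0 0 * (g * h) 1 0 + (g * h) 0 1 * (g * h) 1 1
      = y * (u₁ * v₁) + y⁻¹ * (u₂ * v₂) := by
    rw [h0, h0, h1, h1, ← hu₁, ← hu₂, ← hv₁, ← hv₂, ← hri]
    generalize (√y)⁻¹ = s
    linear_combination (√y ^ 2 * (u₁ * v₁) + s ^ 2 * (u₂ * v₂)) * hφ + u₁ * v₁ * hr
  rw [hE]
  exact abs_scaled_inner_le hT hδ hy hL hdet' (hp ▸ hg)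
end

section
/- Let n be a positive integer. For every g ∈ SL₂(ℝ), writing (a′, b′, c′) = (0, n, 0)·g, one has 2a′² + b′² + 2c′² = n² · (1 + 2 (Re(g·i)/Im(g·i))²). Consequently, for every subgroup Γ of SL₂(ℝ), every τ ∈ SL₂(ℝ), and every real T ≥ n, the set {γ ∈ Γ : 2a′² + b′² + 2c′² ≤ T², where (a′,b′,c′) = (0,n,0)·(τγ)} is equal to the set {γ ∈ Γ : τγ·i ∈ C_{T_n}}, where T_n = √(T²/(2n²) − 1/2). -/
/-!
For `g = (α, β; γ, δ)` one computes `g · i = (αγ + βδ + i) / (γ² + δ²)`, so the slope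
`Re (g · i) / Im (g · i)` is `αγ + βδ` (`re_div_im_smul_I`). On the other side
`(0, n, 0) · g = n (αγ, αδ + βγ, βδ)`, and `αδ - βγ = 1` gives `(αδ + βγ)² = 1 + 4αβγδ`, so the
weighted norm `2a′² + b′² + 2c′²` is `n² (1 + 2 (αγ + βδ)²)`. The description of the norm ball
follows by solving `n² (1 + 2 s²) ≤ T²` for the slope `s`; the hypothesis `n ≤ T` makes the
radicand `T² / (2n²) - 1/2` nonnegative.
-/

open Real

/-- The right action of `g = (α, β; γ, δ) ∈ SL₂(ℝ)` on a real triple `(a,b,c)`,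
corresponding to the substitution action `Q ↦ Q ∘ gᵗ` on `Q = ax² + bxy + cy²`. -/
def formActR (v : ℝ × ℝ × ℝ) (g : Matrix.SpecialLinearGroup (Fin 2) ℝ) : ℝ × ℝ × ℝ :=
  (v.1 * (g 0 0) ^ 2 + v.2.1 * (g 0 0) * (g 1 0) + v.2.2 * (g 1 0) ^ 2,
   2 * v.1 * (g 0 0) * (g 0 1) + v.2.1 * ((g 0 0) * (g 1 1) + (g 0 1) * (g 1 0))
     + 2 * v.2.2 * (g 1 0) * (g 1 1),
   v.1 * (g 0 1) ^ 2 + v.2.1 * (g 0 1) * (g 1 1) + v.2.2 * (g 1 1) ^ 2)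

open UpperHalfPlane in
/-- The slope of `g · i` is the inner product of the rows of `g`. -/
lemma re_div_im_smul_I (g : Matrix.SpecialLinearGroup (Fin 2) ℝ) :
    (g • I).re / (g • I).im = g 0 0 * g 1 0 + g 0 1 * g 1 1 := by
  have hdet : g 0 0 * g 1 1 - g 0 1 * g 1 0 = 1 := by
    rw [← Matrix.det_fin_two, g.det_coe]
  have hpos : 0 < g 1 0 ^ 2 + g 1 1 ^ 2 := by
    by_contra! h
    have h0 : g 1 0 = 0 := by nlinarith [sq_nonneg (g 1 0), sq_nonneg (g 1 1)]
    have h1 : g 1 1 = 0 := by nlinarith [sq_nonneg (g 1 0), sq_nonneg (g 1 1)]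
    simp [h0, h1] at hdet
  have hne : (g 1 0 : ℂ) * Complex.I + g 1 1 ≠ 0 := by
    intro h
    have h0 := congrArg Complex.im h
    have h1 := congrArg Complex.re h
    simp at h0 h1
    simp [h0, h1] at hpos
  have hz : ((g • I : ℍ) : ℂ) =
      (((g 0 0 * g 1 0 + g 0 1 * g 1 1) / (g 1 0 ^ 2 + g 1 1 ^ 2) : ℝ) : ℂ)
        + ((1 / (g 1 0 ^ 2 + g 1 1 ^ 2) : ℝ) : ℂ) * Complex.I := by
    have hc : ((g 1 0 : ℂ) ^ 2 + (g 1 1 : ℂ) ^ 2) ≠ 0 := by exact_mod_cast hpos.ne'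
    have hdc : (g 0 0 : ℂ) * g 1 1 - g 0 1 * g 1 0 = 1 := by exact_mod_cast hdet
    rw [UpperHalfPlane.specialLinearGroup_apply]
    simp only [coe_I]
    push_cast
    -- Unfolds `algebraMap ℝ ℝ` and the composite coercions of the entries to `ℂ`.
    change ((g 0 0 : ℂ) * Complex.I + g 0 1) / ((g 1 0 : ℂ) * Complex.I + g 1 1) = _
    rw [div_eq_iff hne]
    field_simp
    linear_combination (-(g 1 0 : ℂ) + Complex.I * g 1 1) * hdc - (g 1 0 : ℂ) * Complex.I_sq
  have hre := congrArg Complex.re hz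
  have him := congrArg Complex.im hz
  simp only [Complex.add_re, Complex.add_im, Complex.ofReal_re, Complex.ofReal_im,
    Complex.re_ofReal_mul, Complex.im_ofReal_mul, Complex.I_re, Complex.I_im, mul_zero, mul_one,
    add_zero, zero_add, coe_re, coe_im] at hre him
  rw [hre, him]
  field_simp

lemma norm_formActR_eq (n : ℝ) (g : Matrix.SpecialLinearGroup (Fin 2) ℝ) :
    2 * (formActR (0, n, 0) g).1 ^ 2 + (formActR (0, n, 0) g).2.1 ^ 2
        + 2 * (formActR (0, n, 0) g).2.2 ^ 2 =
      n ^ 2 * (1 + 2 * ((g • UpperHalfPlane.I).re / (g • UpperHalfPlane.I).im) ^ 2) := by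
  have hdet : g 0 0 * g 1 1 - g 0 1 * g 1 0 = 1 := by
    rw [← Matrix.det_fin_two, g.det_coe]
  rw [re_div_im_smul_I]
  simp only [formActR]
  -- `(αδ + βγ)² - 4αβγδ = (αδ - βγ)²`, and the determinant is `1`.
  linear_combination n ^ 2 * (g 0 0 * g 1 1 - g 0 1 * g 1 0 + 1) * hdet

lemma mem_cone_iff (T : ℝ) (z : UpperHalfPlane) : z ∈ cone T ↔ |z.re / z.im| ≤ T := by
  rw [abs_div, abs_of_pos z.im_pos, div_le_iff₀ z.im_pos]
  rfl

/-- For `(a′,b′,c′) = (0,n,0)·g` one has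
`2a′² + b′² + 2c′² = n²(1 + 2(Re(g·i)/Im(g·i))²)`; consequently, for any subgroup
`Γ ≤ SL₂(ℝ)`, any `τ ∈ SL₂(ℝ)` and any `T ≥ n`, the set of `γ ∈ Γ` with
`2a′² + b′² + 2c′² ≤ T²` (where `(a′,b′,c′) = (0,n,0)·(τγ)`) coincides with the set of
`γ ∈ Γ` with `τγ·i ∈ C_{T_n}`, `T_n = √(T²/(2n²) − 1/2)`. -/
theorem norm_ball_eq_cone (n : ℕ) (hn : 0 < n) :
    (∀ g : Matrix.SpecialLinearGroup (Fin 2) ℝ,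
      2 * (formActR (0, (n : ℝ), 0) g).1 ^ 2 + (formActR (0, (n : ℝ), 0) g).2.1 ^ 2
          + 2 * (formActR (0, (n : ℝ), 0) g).2.2 ^ 2 =
        (n : ℝ) ^ 2 * (1 + 2 * ((g • UpperHalfPlane.I).re / (g • UpperHalfPlane.I).im) ^ 2)) ∧
    ∀ (Γ : Subgroup (Matrix.SpecialLinearGroup (Fin 2) ℝ))
      (τ : Matrix.SpecialLinearGroup (Fin 2) ℝ) (T : ℝ), (n : ℝ) ≤ T →
      {γ : Γ | 2 * (formActR (0, (n : ℝ), 0) (τ * γ)).1 ^ 2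
          + (formActR (0, (n : ℝ), 0) (τ * γ)).2.1 ^ 2
          + 2 * (formActR (0, (n : ℝ), 0) (τ * γ)).2.2 ^ 2 ≤ T ^ 2} =
      {γ : Γ | (τ * γ) • UpperHalfPlane.I ∈
          cone (Real.sqrt (T ^ 2 / (2 * (n : ℝ) ^ 2) - 1 / 2))} := by
  refine ⟨norm_formActR_eq n, fun Γ τ T hT => ?_⟩
  have hn' : (0 : ℝ) < n := by exact_mod_cast hn
  ext γ
  have hrad : 0 ≤ T ^ 2 / (2 * (n : ℝ) ^ 2) - 1 / 2 := by
    rw [sub_nonneg, div_le_div_iff₀ two_pos (by positivity)]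
    nlinarith
  rw [Set.mem_ofPred_eq, Set.mem_ofPred_eq, norm_formActR_eq, mem_cone_iff,
    Real.le_sqrt (abs_nonneg _) hrad, sq_abs, le_sub_iff_add_le, le_div_iff₀ (by positivity)]
  ring_nf
end

section
/- Let Ψ : ℍ → [0, ∞] be Borel measurable and let T ∈ ℝ. Then ∫₀^∞ Ψ(Ty + iy) dy/y = ∫_{1/√(T²+1)}^∞ Ψ(Ty + iy) dy/y + ∫_{1/√(T²+1)}^∞ Ψ( −1/(−Ty + iy) ) dy/y, as an identity of extended real numbers. -/
/-!
The ray `y ↦ Ty + iy` is split at the point `y = r`, where `r = 1/√(T²+1)`, at which it meets the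
unit circle. For `y > 0` one has `-1/(-Ty + iy) = Tu + iu` with `u = r²/y`, so the inversion carries
the mirrored ray onto the original one. The substitution `u = r²/y` maps `(r, ∞)` onto `(0, r)` and
preserves `dy/y`, so the second integral on the right is the integral over `(0, r)`.
-/

open MeasureTheory ENNReal

/-- The measure `dy/y` is invariant under `y ↦ r²/y`, which exchanges `(0, r)` and `(r, ∞)`. -/
lemma lintegral_Ioo_div_eq (g : ℝ → ℝ≥0∞) {r : ℝ} (hr : 0 < r) :
    ∫⁻ y in Set.Ioo 0 r, g y * ENNReal.ofReal (1 / y) =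
      ∫⁻ y in Set.Ioi r, g (r ^ 2 / y) * ENNReal.ofReal (1 / y) := by
  have himg : (fun y : ℝ => r ^ 2 / y) '' Set.Ioi r = Set.Ioo 0 r := by
    ext u
    simp only [Set.mem_image, Set.mem_Ioi, Set.mem_Ioo]
    constructor
    · rintro ⟨y, hy, rfl⟩
      have hy0 : 0 < y := hr.trans hy
      refine ⟨by positivity, ?_⟩
      rw [div_lt_iff₀ hy0]
      nlinarith
    · rintro ⟨hu0, hur⟩
      refine ⟨r ^ 2 / u, ?_, by field_simp⟩
      rw [lt_div_iff₀ hu0]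
      nlinarith
  have hderiv : ∀ y ∈ Set.Ioi r,
      HasDerivWithinAt (fun y : ℝ => r ^ 2 / y) (-(r ^ 2 / y ^ 2)) (Set.Ioi r) y := by
    intro y hy
    have hy0 : y ≠ 0 := (hr.trans hy).ne'
    have h := ((hasDerivAt_inv hy0).const_mul (r ^ 2)).hasDerivWithinAt (s := Set.Ioi r)
    simpa [div_eq_mul_inv] using h
  have hanti : AntitoneOn (fun y : ℝ => r ^ 2 / y) (Set.Ioi r) := by
    intro a ha b _ hab
    have ha0 : 0 < a := hr.trans ha
    exact div_le_div_of_nonneg_left (by positivity) ha0 hab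
  rw [← himg, lintegral_image_eq_lintegral_deriv_mul_of_antitoneOn measurableSet_Ioi hderiv hanti]
  refine setLIntegral_congr_fun measurableSet_Ioi fun y hy => ?_
  have hy0 : 0 < y := hr.trans hy
  have h : ENNReal.ofReal (- -(r ^ 2 / y ^ 2)) * ENNReal.ofReal (1 / (r ^ 2 / y)) =
      ENNReal.ofReal (1 / y) := by
    rw [neg_neg, ← ENNReal.ofReal_mul (by positivity)]
    congr 1
    field_simp
  rw [← h]
  ring

/-- The inversion `z ↦ -1/z` carries the ray through `-T + i` to the ray through `T + i`. -/
lemma neg_one_div_ray (T : ℝ) {y : ℝ} (hy : 0 < y) :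
    -1 / (((-T * y : ℝ) : ℂ) + (y : ℝ) * Complex.I) =
      ((T * ((1 / Real.sqrt (T ^ 2 + 1)) ^ 2 / y) : ℝ) : ℂ) +
        (((1 / Real.sqrt (T ^ 2 + 1)) ^ 2 / y : ℝ) : ℂ) * Complex.I := by
  have hc : 0 < T ^ 2 + 1 := by positivity
  have hcC : (T : ℂ) ^ 2 + 1 ≠ 0 := by exact_mod_cast hc.ne'
  have hyC : (y : ℂ) ≠ 0 := by exact_mod_cast hy.ne'
  have hz : ((-T * y : ℝ) : ℂ) + (y : ℝ) * Complex.I ≠ 0 := by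
    intro h
    have := congrArg Complex.im h
    simp at this
    exact hy.ne' this
  rw [div_pow, Real.sq_sqrt hc.le, div_eq_iff hz]
  push_cast
  field_simp
  ring_nf
  rw [Complex.I_sq]
  ring

/-- The two-sided cuspidal geodesic identity: for Borel measurable `Ψ : ℍ → [0,∞]` and any
real `T`,
`∫₀^∞ Ψ(Ty + iy) dy/y
  = ∫_{1/√(T²+1)}^∞ Ψ(Ty + iy) dy/y + ∫_{1/√(T²+1)}^∞ Ψ(−1/(−Ty + iy)) dy/y`,
as an identity of extended real numbers. -/
theorem shear_split (Ψ : ℂ → ℝ≥0∞) (hΨ : Measurable Ψ) (T : ℝ) :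
    ∫⁻ y in Set.Ioi (0 : ℝ),
        Ψ ((T * y : ℝ) + (y : ℝ) * Complex.I) * ENNReal.ofReal (1 / y) =
      (∫⁻ y in Set.Ioi (1 / Real.sqrt (T ^ 2 + 1)),
        Ψ ((T * y : ℝ) + (y : ℝ) * Complex.I) * ENNReal.ofReal (1 / y)) +
      ∫⁻ y in Set.Ioi (1 / Real.sqrt (T ^ 2 + 1)),
        Ψ (-1 / ((-T * y : ℝ) + (y : ℝ) * Complex.I)) * ENNReal.ofReal (1 / y) := by
  have hr : 0 < 1 / Real.sqrt (T ^ 2 + 1) := by positivity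
  have hinv : ∫⁻ y in Set.Ioi (1 / Real.sqrt (T ^ 2 + 1)),
        Ψ (-1 / ((-T * y : ℝ) + (y : ℝ) * Complex.I)) * ENNReal.ofReal (1 / y) =
      ∫⁻ y in Set.Ioo 0 (1 / Real.sqrt (T ^ 2 + 1)),
        Ψ ((T * y : ℝ) + (y : ℝ) * Complex.I) * ENNReal.ofReal (1 / y) := by
    rw [lintegral_Ioo_div_eq (fun y : ℝ => Ψ ((T * y : ℝ) + (y : ℝ) * Complex.I)) hr]
    refine setLIntegral_congr_fun measurableSet_Ioi fun y hy => ?_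
    rw [neg_one_div_ray T (hr.trans hy)]
  rw [hinv, setLIntegral_congr Ioo_ae_eq_Ioc, add_comm,
    ← lintegral_union measurableSet_Ioi Set.Ioc_disjoint_Ioi_same,
    Set.Ioc_union_Ioi_eq_Ioi hr.le]
end

section
/- Let Γ be a countable subgroup of SL₂(ℝ) acting on the upper half-plane ℍ by Möbius transformations, and let 𝓕 ⊆ ℍ be a measurable fundamental domain for this action with respect to the hyperbolic measure dμ = dx dy/y². Let τ ∈ SL₂(ℝ), T ≥ 0, and let Ψ : ℍ → [0, ∞] be Borel measurable and Γ-invariant (Ψ(γ·z) = Ψ(z) for all γ ∈ Γ, z ∈ ℍ). Then ∫_𝓕 ( Σ_{γ ∈ Γ} 𝟙[ τ^{−1}γ·z ∈ C_T ] ) Ψ(z) dμ(z) = ∫_{−T}^{T} ∫₀^∞ Ψ( τ·(xy + iy) ) dy/y dx, as an identity of extended real numbers. -/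
/-!
The sum over `Γ` and the integral over `𝓕` combine to a single integral over `ℍ`: since `Ψ` is
`Γ`-invariant, the `γ`-th summand is `Φ (γ z)` with `Φ z = 𝟙[τ⁻¹ z ∈ C_T] Ψ z`, and the translates of
`𝓕` tile `ℍ` up to null sets. Invariance of the measure under `τ` then rewrites `∫ Φ dμ` as the integral
of `Ψ (τ z)` over the cone `C_T`, and the coordinates `z = xy + iy` straighten the cone to the strip
`|x| ≤ T`, `y > 0`, with `dμ = dx dy / y` (`lintegral_cone`).

Both the tiling and the invariance come from Mathlib's `IsFundamentalDomain` and its invariant measure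
on the type `ℍ`; `map_coe_volume` and `moeb_coe` transport them to `hypMeasure` and `moeb` on `ℂ`.
-/

open MeasureTheory ENNReal

/-- The hyperbolic measure `dμ = dx dy / y²` on the upper half-plane, viewed as a measure
on `ℂ` supported on `{Im z > 0}`. -/
noncomputable def hypMeasure : Measure ℂ :=
  (volume.restrict {z : ℂ | 0 < z.im}).withDensity fun z => ENNReal.ofReal ((z.im ^ 2)⁻¹)

/-- The Möbius action of a real `2×2` matrix on `ℂ`. -/
noncomputable def moeb (M : Matrix (Fin 2) (Fin 2) ℝ) (z : ℂ) : ℂ :=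
  ((M 0 0 : ℂ) * z + (M 0 1 : ℂ)) / ((M 1 0 : ℂ) * z + (M 1 1 : ℂ))

/-- The cone `C_T = {z ∈ ℍ : |Re z| ≤ T · Im z}`, as a subset of `ℂ`. -/
def coneC (T : ℝ) : Set ℂ := {z | 0 < z.im ∧ |z.re| ≤ T * z.im}

open UpperHalfPlane

/-- Measurability of the action of `SL₂(ℝ)` on `ℍ`, inherited from that of `GL₂(ℝ)`. Mathlib's
instances about the measure on `ℍ` are stated for `GL₂(ℝ)` only. -/
instance instMeasurableConstSMulSL :
    MeasurableConstSMul (Matrix.SpecialLinearGroup (Fin 2) ℝ) ℍ where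
  measurable_const_smul g :=
    measurable_const_smul (Matrix.SpecialLinearGroup.mapGL ℝ g : GL (Fin 2) ℝ)

/-- Invariance of the hyperbolic measure under `SL₂(ℝ)`, inherited from `GL₂(ℝ)`. -/
instance instSMulInvariantMeasureSL :
    SMulInvariantMeasure (Matrix.SpecialLinearGroup (Fin 2) ℝ) ℍ volume where
  measure_preimage_smul g _ hs :=
    measure_preimage_smul_of_nullMeasurableSet hs.nullMeasurableSet
      (Matrix.SpecialLinearGroup.mapGL ℝ g : GL (Fin 2) ℝ)

lemma moeb_coe (g : Matrix.SpecialLinearGroup (Fin 2) ℝ) (z : ℍ) :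
    moeb (g : Matrix (Fin 2) (Fin 2) ℝ) z = ((g • z : ℍ) : ℂ) := by
  rw [coe_specialLinearGroup_apply]; rfl

/-- The inverse here is the matrix inverse, which for determinant one is the group inverse. -/
lemma moeb_coe_inv (g : Matrix.SpecialLinearGroup (Fin 2) ℝ) (z : ℍ) :
    moeb ((g : Matrix (Fin 2) (Fin 2) ℝ)⁻¹) z = ((g⁻¹ • z : ℍ) : ℂ) := by
  rw [← moeb_coe, Matrix.SpecialLinearGroup.coe_inv, Matrix.inv_def, g.det_coe]
  simp

lemma range_coe_eq : Set.range (UpperHalfPlane.coe) = {z : ℂ | 0 < z.im} := by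
  ext z
  exact ⟨by rintro ⟨w, rfl⟩; exact w.im_pos, fun h => ⟨⟨z, h⟩, rfl⟩⟩

/-- The measure `hypMeasure` on `ℂ` is Mathlib's invariant measure on `ℍ`, pushed forward along the
inclusion; this lets the invariance of the latter be used. -/
lemma map_coe_volume : (volume : Measure ℍ).map UpperHalfPlane.coe = hypMeasure := by
  ext s hs
  rw [Measure.map_apply measurable_coe hs, volume_eq_lintegral, Set.image_preimage_eq_inter_range,
    range_coe_eq, hypMeasure, withDensity_apply _ hs, Measure.restrict_restrict hs]
  refine lintegral_congr fun z => ?_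
  rw [ENNReal.ofReal, ENNReal.coe_inj, Real.toNNReal_of_nonneg (by positivity)]
  ext
  simp

lemma measurable_moeb (M : Matrix (Fin 2) (Fin 2) ℝ) : Measurable (moeb M) := by
  unfold moeb
  fun_prop

lemma measurableSet_coneC (T : ℝ) : MeasurableSet (coneC T) :=
  (measurableSet_lt measurable_const Complex.measurable_im).inter
    (measurableSet_le Complex.measurable_re.abs (Complex.measurable_im.const_mul T))

lemma lintegral_scale {y : ℝ} (hy : 0 < y) (g : ℝ → ℝ≥0∞) (hg : Measurable g) :
    ∫⁻ x, g x = ENNReal.ofReal y * ∫⁻ u, g (u * y) := by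
  conv_lhs => rw [← Real.smul_map_volume_mul_right hy.ne']
  rw [lintegral_smul_measure, lintegral_map hg (by fun_prop), abs_of_pos hy, smul_eq_mul]

lemma mem_coneC_iff (T x : ℝ) {y : ℝ} (hy : 0 < y) :
    ((x * y : ℝ) : ℂ) + (y : ℝ) * Complex.I ∈ coneC T ↔ x ∈ Set.Icc (-T) T := by
  have hre : (((x * y : ℝ) : ℂ) + (y : ℝ) * Complex.I).re = x * y := by simp
  have him : (((x * y : ℝ) : ℂ) + (y : ℝ) * Complex.I).im = y := by simp
  rw [coneC, Set.mem_ofPred_eq, hre, him, abs_mul, abs_of_pos hy, mul_le_mul_iff_left₀ hy, abs_le,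
    Set.mem_Icc, and_iff_right hy]

/-- Fubini for `dx dy / y²`, integrating over horizontal lines first. -/
lemma lintegral_hypMeasure (f : ℂ → ℝ≥0∞) (hf : Measurable f) :
    ∫⁻ z, f z ∂hypMeasure = ∫⁻ y in Set.Ioi (0 : ℝ), ∫⁻ x : ℝ,
      ENNReal.ofReal ((y ^ 2)⁻¹) * f (x + y * Complex.I) := by
  have h0 : MeasurableSet {z : ℂ | 0 < z.im} :=
    measurableSet_lt measurable_const Complex.measurable_im
  have hm : Measurable fun p : ℝ × ℝ =>
      ENNReal.ofReal ((p.2 ^ 2)⁻¹) * f (p.1 + p.2 * Complex.I) :=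
    Measurable.mul (by fun_prop) (hf.comp (by fun_prop))
  calc ∫⁻ z, f z ∂hypMeasure
      = ∫⁻ z : ℂ, {z : ℂ | 0 < z.im}.indicator
          (fun z => ENNReal.ofReal ((z.im ^ 2)⁻¹) * f z) z := by
        rw [lintegral_indicator h0, hypMeasure]
        exact lintegral_withDensity_eq_lintegral_mul _ (by fun_prop) hf
    _ = ∫⁻ p : ℝ × ℝ, {p : ℝ × ℝ | 0 < p.2}.indicator
          (fun p => ENNReal.ofReal ((p.2 ^ 2)⁻¹) * f (p.1 + p.2 * Complex.I)) p := by
        rw [← Complex.volume_preserving_equiv_real_prod.symm.lintegral_comp_emb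
          (MeasurableEquiv.measurableEmbedding _)]
        refine lintegral_congr fun p => ?_
        have hp : Complex.measurableEquivRealProd.symm p = p.1 + p.2 * Complex.I := by
          apply Complex.ext <;> simp
        rw [hp]
        simp [Set.indicator]
    _ = _ := by
        rw [Measure.volume_eq_prod, lintegral_prod_symm, ← lintegral_indicator measurableSet_Ioi]
        · refine lintegral_congr fun y => ?_
          by_cases h : 0 < y <;> simp [Set.indicator, h]
        · exact (hm.indicator (measurableSet_lt measurable_const measurable_snd)).aemeasurable

/-- Integration over the cone in the coordinates `(x, y) ↦ xy + iy`: on the horizontal line at height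
`y` the substitution `x ↦ xy` contributes a factor `y`, which turns `dx dy / y²` into `dx dy / y`, and
it maps the fixed interval `[-T, T]` onto the slice of the cone. -/
lemma lintegral_cone (T : ℝ) (F : ℂ → ℝ≥0∞) (hF : Measurable F) :
    ∫⁻ z, (coneC T).indicator 1 z * F z ∂hypMeasure =
      ∫⁻ x in Set.Icc (-T) T, ∫⁻ y in Set.Ioi (0 : ℝ),
        F ((x * y : ℝ) + (y : ℝ) * Complex.I) * ENNReal.ofReal (1 / y) := by
  have hCF : Measurable fun z => (coneC T).indicator (1 : ℂ → ℝ≥0∞) z * F z :=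
    (measurable_one.indicator (measurableSet_coneC T)).mul hF
  have hm : Measurable (Function.uncurry fun y x : ℝ =>
      F ((x * y : ℝ) + (y : ℝ) * Complex.I) * ENNReal.ofReal (1 / y)) := by
    simp only [Function.uncurry_def]
    refine Measurable.mul (hF.comp ?_) ?_ <;> fun_prop
  rw [lintegral_hypMeasure _ hCF]
  refine Eq.trans (setLIntegral_congr_fun measurableSet_Ioi fun y (hy : 0 < y) => ?_)
    (lintegral_lintegral_swap hm.aemeasurable)
  have hy_meas : Measurable fun x : ℝ => ENNReal.ofReal ((y ^ 2)⁻¹) *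
      ((coneC T).indicator (1 : ℂ → ℝ≥0∞) (x + y * Complex.I) * F (x + y * Complex.I)) :=
    (hCF.comp (by fun_prop : Measurable fun x : ℝ => (x : ℂ) + y * Complex.I)).const_mul _
  have hy_inv : ENNReal.ofReal y * ENNReal.ofReal ((y ^ 2)⁻¹) = ENNReal.ofReal (1 / y) := by
    rw [← ENNReal.ofReal_mul hy.le]
    congr 1
    field_simp
  rw [lintegral_scale hy _ hy_meas, ← lintegral_const_mul' _ _ ENNReal.ofReal_ne_top,
    ← lintegral_indicator measurableSet_Icc]
  refine lintegral_congr fun x => ?_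
  rw [← mul_assoc, hy_inv]
  have hx := mem_coneC_iff T x hy
  by_cases h : x ∈ Set.Icc (-T) T
  · rw [Set.indicator_of_mem h, Set.indicator_of_mem (hx.2 h), Pi.one_apply, one_mul, mul_comm]
  · rw [Set.indicator_of_notMem h, Set.indicator_of_notMem (mt hx.1 h), zero_mul, mul_zero]

/-- Unfolding over a fundamental domain: if `𝓕` is a measurable fundamental domain for the
Möbius action of a countable subgroup `Γ ≤ SL₂(ℝ)` on `ℍ` with respect to the hyperbolic
measure, `Ψ ≥ 0` is measurable and `Γ`-invariant, then
`∫_𝓕 (Σ_{γ∈Γ} 𝟙[τ⁻¹γz ∈ C_T]) Ψ dμ = ∫_{−T}^T ∫₀^∞ Ψ(τ·(xy+iy)) dy/y dx`. -/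
theorem unfold_cone_integral (Γ : Subgroup (Matrix.SpecialLinearGroup (Fin 2) ℝ)) [Countable Γ]
    (𝓕 : Set ℂ) (h𝓕m : MeasurableSet 𝓕) (h𝓕H : 𝓕 ⊆ {z : ℂ | 0 < z.im})
    (hcover : hypMeasure ({z : ℂ | 0 < z.im} \
      ⋃ γ : Γ, (fun z => moeb ((γ : Matrix.SpecialLinearGroup (Fin 2) ℝ)⁻¹ :
        Matrix (Fin 2) (Fin 2) ℝ) z) ⁻¹' 𝓕) = 0)
    (hdisj : ∀ γ : Γ, (γ : Matrix.SpecialLinearGroup (Fin 2) ℝ) ≠ 1 →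
      hypMeasure (𝓕 ∩ (fun z => moeb ((γ : Matrix.SpecialLinearGroup (Fin 2) ℝ)⁻¹ :
        Matrix (Fin 2) (Fin 2) ℝ) z) ⁻¹' 𝓕) = 0)
    (τ : Matrix.SpecialLinearGroup (Fin 2) ℝ) (T : ℝ) (hT : 0 ≤ T)
    (Ψ : ℂ → ℝ≥0∞) (hΨ : Measurable Ψ)
    (hinv : ∀ γ : Γ, ∀ z : ℂ, 0 < z.im →
      Ψ (moeb ((γ : Matrix.SpecialLinearGroup (Fin 2) ℝ) : Matrix (Fin 2) (Fin 2) ℝ) z) = Ψ z) :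
    ∫⁻ z in 𝓕, (∑' γ : Γ, (coneC T).indicator 1
        (moeb ((τ⁻¹ * (γ : Matrix.SpecialLinearGroup (Fin 2) ℝ) :
          Matrix.SpecialLinearGroup (Fin 2) ℝ) : Matrix (Fin 2) (Fin 2) ℝ) z)) * Ψ z
        ∂hypMeasure =
      ∫⁻ x in Set.Icc (-T) T, ∫⁻ y in Set.Ioi (0 : ℝ),
        Ψ (moeb (τ : Matrix (Fin 2) (Fin 2) ℝ) ((x * y : ℝ) + (y : ℝ) * Complex.I))
          * ENNReal.ofReal (1 / y) := by
  set S : Set ℍ := UpperHalfPlane.coe ⁻¹' 𝓕 with hS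
  have hSm : MeasurableSet S := measurable_coe h𝓕m
  have hmap : ∀ s : Set ℂ, hypMeasure s = volume (UpperHalfPlane.coe ⁻¹' s : Set ℍ) := fun s => by
    rw [← map_coe_volume, measurableEmbedding_coe.map_apply]
  have hfd : IsFundamentalDomain Γ S (volume : Measure ℍ) := by
    refine .mk'' hSm.nullMeasurableSet ?_ ?_
      fun g => (measurePreserving_smul g volume).quasiMeasurePreserving
    · rw [hmap] at hcover
      refine measure_mono_null (fun z hz => ?_) hcover
      refine ⟨z.im_pos, fun hz' => hz ?_⟩
      obtain ⟨γ, hγ⟩ := Set.mem_iUnion.1 hz'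
      -- The cover hypothesis gives `γ⁻¹ • z ∈ S`.
      refine ⟨γ⁻¹, ?_⟩
      rw [Set.mem_preimage, moeb_coe_inv] at hγ
      exact hγ
    · intro γ hγ
      have h := hdisj γ (by simpa using hγ)
      rw [hmap] at h
      refine measure_mono_null (fun z hz => show z ∈ S ∧ _ from ⟨hz.2, ?_⟩) h
      rw [Set.mem_preimage, moeb_coe_inv]
      exact Set.mem_smul_set_iff_inv_smul_mem.1 hz.1
  have hcone : Measurable ((coneC T).indicator (1 : ℂ → ℝ≥0∞)) :=
    measurable_one.indicator (measurableSet_coneC T)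
  have hΦm : Measurable fun z : ℍ =>
      (coneC T).indicator (1 : ℂ → ℝ≥0∞) ((τ⁻¹ • z : ℍ) : ℂ) * Ψ z :=
    (hcone.comp (measurable_coe.comp (measurable_const_smul τ⁻¹))).mul (hΨ.comp measurable_coe)
  calc _ = ∫⁻ z in S, ∑' γ : Γ, (coneC T).indicator 1 ((τ⁻¹ • γ • z : ℍ) : ℂ) *
            Ψ ((γ • z : ℍ) : ℂ) := by
        rw [← map_coe_volume, measurableEmbedding_coe.restrict_map,
          measurableEmbedding_coe.lintegral_map]
        refine lintegral_congr fun z => ?_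
        -- Move `Ψ z` into the sum, where invariance replaces it by `Ψ (γ z)`.
        rw [← ENNReal.tsum_mul_right]
        refine tsum_congr fun γ => ?_
        rw [moeb_coe, mul_smul, ← hinv γ z z.im_pos, moeb_coe]
        rfl
    _ = ∫⁻ z : ℍ, (coneC T).indicator 1 ((τ⁻¹ • z : ℍ) : ℂ) * Ψ z := by
        rw [hfd.lintegral_eq_tsum'']
        exact lintegral_tsum fun γ => (hΦm.comp (measurable_const_smul γ)).aemeasurable
    _ = ∫⁻ z : ℍ, (coneC T).indicator 1 (z : ℂ) * Ψ ((τ • z : ℍ) : ℂ) := by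
        rw [← (measurePreserving_smul τ (volume : Measure ℍ)).lintegral_comp hΦm]
        simp only [inv_smul_smul]
    _ = ∫⁻ z, (coneC T).indicator 1 z * Ψ (moeb τ z) ∂hypMeasure := by
        rw [← map_coe_volume, measurableEmbedding_coe.lintegral_map]
        simp only [moeb_coe]
    _ = _ := lintegral_cone T (fun z => Ψ (moeb τ z)) (hΨ.comp (measurable_moeb _))
end

section
/- Let n be a positive integer, let j be an integer with 0 ≤ j < 2n, and set d = gcd(n, j) (with gcd(n, 0) = n). Then the smallest positive integer k such that the matrix (1 − kj/n, −j²k/n²; k, 1 + kj/n) belongs to Γ₂ is: k = n²/d² if nj/d² is odd, and k = 2n²/d² if nj/d² is even. -/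
/-- Parity criterion: for coprime `N`, `J`, an integral matrix of the shape that occurs at
`k = N² m` lies in `Γ₂` exactly when `N J` is odd or `m` is even. -/
lemma memGamma2_iff (N J m : ℕ) (hc : Nat.Coprime N J)
    (g : Matrix.SpecialLinearGroup (Fin 2) ℤ)
    (h00 : g 0 0 = 1 - N * J * m) (h01 : g 0 1 = -(J ^ 2 * m))
    (h10 : g 1 0 = N ^ 2 * m) (h11 : g 1 1 = 1 + N * J * m) :
    memGamma2 g ↔ Odd (N * J) ∨ Even m := by
  have hNJ : ¬ (Even N ∧ Even J) := fun ⟨h1, h2⟩ =>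
    Nat.not_coprime_of_dvd_of_dvd one_lt_two h1.two_dvd h2.two_dvd hc
  unfold memGamma2
  rw [h00, h01, h10, h11]
  simp only [← Int.not_even_iff_odd, ← Nat.not_even_iff_odd, Int.even_sub, Int.even_add,
    Int.even_mul, Int.even_pow, Nat.even_mul, even_neg, Int.even_coe_nat, Int.not_even_one] at *
  tauto

/-- The admissible `k` are the multiples `N² m`, `m > 0`, with `N J` odd or `m` even. -/
lemma exists_memGamma2_iff (n j N J d k : ℕ) (hN : 0 < N) (hd : 0 < d) (hn : n = N * d)
    (hj : j = J * d) (hc : Nat.Coprime N J) :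
    (0 < k ∧ ∃ g : Matrix.SpecialLinearGroup (Fin 2) ℤ, memGamma2 g ∧
        ((g : Matrix (Fin 2) (Fin 2) ℤ).map (Int.cast : ℤ → ℚ)) =
          !![1 - (k : ℚ) * j / n, -((j : ℚ) ^ 2 * k / (n : ℚ) ^ 2);
             (k : ℚ), 1 + (k : ℚ) * j / n]) ↔
      ∃ m : ℕ, 0 < m ∧ k = N ^ 2 * m ∧ (Odd (N * J) ∨ Even m) := by
  have hNq : (N : ℚ) ≠ 0 := by positivity
  have hdq : (d : ℚ) ≠ 0 := by positivity
  have e1 (m : ℕ) : ((N ^ 2 * m : ℕ) : ℚ) * j / n = N * J * m := by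
    subst hn hj; push_cast; field_simp
  have e2 (m : ℕ) : (j : ℚ) ^ 2 * (N ^ 2 * m : ℕ) / (n : ℚ) ^ 2 = J ^ 2 * m := by
    subst hn hj; push_cast; field_simp
  constructor
  · rintro ⟨hk, g, hg, hm⟩
    have h00 := congrFun (congrFun hm 0) 0
    have h01 := congrFun (congrFun hm 0) 1
    have h10 := congrFun (congrFun hm 1) 0
    have h11 := congrFun (congrFun hm 1) 1
    simp only [Matrix.map_apply, Matrix.of_apply, Matrix.cons_val', Matrix.cons_val_zero,
      Matrix.cons_val_one, Matrix.cons_val_fin_one] at h00 h01 h10 h11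
    -- Integrality of the upper right entry forces `N² ∣ J² k`, hence `N² ∣ k`.
    have hdvd : N ^ 2 ∣ k := by
      have hq : (J : ℚ) ^ 2 * k = N ^ 2 * (-(g 0 1 : ℤ) : ℚ) := by
        rw [h01]; subst hn hj; push_cast; field_simp
      have hz : ((J ^ 2 * k : ℕ) : ℤ) = ((N ^ 2 : ℕ) : ℤ) * -(g 0 1) := by
        push_cast; exact_mod_cast hq
      exact (Nat.Coprime.pow 2 2 hc).dvd_of_dvd_mul_left
        (Int.natCast_dvd_natCast.mp ⟨_, hz⟩)
    obtain ⟨m, rfl⟩ := hdvd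
    rw [e1] at h00 h11
    rw [e2] at h01
    refine ⟨m, Nat.pos_of_mul_pos_left hk, rfl, (memGamma2_iff N J m hc g ?_ ?_ ?_ ?_).mp hg⟩
    · exact_mod_cast h00
    · exact_mod_cast h01
    · exact_mod_cast h10
    · exact_mod_cast h11
  · rintro ⟨m, hm, rfl, h⟩
    refine ⟨by positivity, ⟨!![1 - N * J * m, -(J ^ 2 * m); N ^ 2 * m, 1 + N * J * m],
      by rw [Matrix.det_fin_two_of]; ring⟩, ?_, ?_⟩
    · exact (memGamma2_iff N J m hc _ rfl rfl rfl rfl).mpr h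
    · rw [e1, e2]
      ext a b
      fin_cases a <;> fin_cases b <;> simp

/-- With `d = gcd(n,j)`, the smallest positive integer `k` such that the matrix
`(1 − kj/n, −j²k/n²; k, 1 + kj/n)` belongs to `Γ₂` is `n²/d²` when `nj/d²` is odd, and
`2n²/d²` when `nj/d²` is even. -/
theorem cusp_width_Gamma2 (n j : ℕ) (hn : 0 < n) (hj : j < 2 * n) :
    IsLeast {k : ℕ | 0 < k ∧ ∃ g : Matrix.SpecialLinearGroup (Fin 2) ℤ, memGamma2 g ∧
        ((g : Matrix (Fin 2) (Fin 2) ℤ).map (Int.cast : ℤ → ℚ)) =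
          !![1 - (k : ℚ) * j / n, -((j : ℚ) ^ 2 * k / (n : ℚ) ^ 2);
             (k : ℚ), 1 + (k : ℚ) * j / n]}
      (if Odd (n * j / Nat.gcd n j ^ 2) then (n / Nat.gcd n j) ^ 2
        else 2 * (n / Nat.gcd n j) ^ 2) := by
  have hd : 0 < Nat.gcd n j := Nat.gcd_pos_of_pos_left j hn
  have hnN : n = n / Nat.gcd n j * Nat.gcd n j :=
    (Nat.div_mul_cancel (Nat.gcd_dvd_left n j)).symm
  have hjJ : j = j / Nat.gcd n j * Nat.gcd n j :=
    (Nat.div_mul_cancel (Nat.gcd_dvd_right n j)).symm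
  have hc : Nat.Coprime (n / Nat.gcd n j) (j / Nat.gcd n j) := Nat.coprime_div_gcd_div_gcd hd
  have hprod : n * j / Nat.gcd n j ^ 2 = n / Nat.gcd n j * (j / Nat.gcd n j) := by
    rw [sq, Nat.div_mul_div_comm (Nat.gcd_dvd_left n j) (Nat.gcd_dvd_right n j)]
  have hN : 0 < n / Nat.gcd n j := Nat.div_pos (Nat.gcd_le_left j hn) hd
  simp only [hprod, exists_memGamma2_iff n j _ _ _ _ hN hd hnN hjJ hc]
  generalize n / Nat.gcd n j = N at *
  generalize j / Nat.gcd n j = J at *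
  split_ifs with h
  · refine ⟨⟨1, one_pos, (mul_one _).symm, Or.inl h⟩, ?_⟩
    rintro k ⟨m, hm, rfl, -⟩
    exact Nat.le_mul_of_pos_right _ hm
  · refine ⟨⟨2, two_pos, mul_comm _ _, Or.inr even_two⟩, ?_⟩
    rintro k ⟨m, hm, rfl, h' | h'⟩
    · exact absurd h' h
    · rw [mul_comm]
      exact Nat.mul_le_mul_left _ (Nat.le_of_dvd hm h'.two_dvd)
end

section
/- Let n be a positive integer and j an integer with 0 ≤ j < 2n, and set d = gcd(n, j) (with gcd(n, 0) = n). Then there exists a matrix γ = (a, b; c, e) ∈ Γ₂ with c ≠ 0 and a·n = c·j (that is, with γ·∞ = j/n under the Möbius action) if and only if nj/d² is even. -/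
/-- A coprime pair of opposite parities is the first column of an element of `Γ₂`. -/
theorem exists_second_column (q p : ℤ) (h : IsCoprime q p) (hpq : Even (p * q)) :
    ∃ b e : ℤ, q * e - b * p = 1 ∧
      ((Odd q ∧ Even b ∧ Even p ∧ Odd e) ∨ (Even q ∧ Odd b ∧ Odd p ∧ Even e)) := by
  obtain ⟨u, v, huv⟩ := h
  -- The parities of the second column, for any completion, are constrained by the determinant.
  have key : ∀ b e : ℤ, q * e - b * p = 1 →
      ((Odd q ∧ Even p ∧ Odd e) ∨ (Even q ∧ Odd b ∧ Odd p)) := by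
    intro b e h1
    have h2 : Odd (q * e - b * p) := h1 ▸ odd_one
    simp only [← Int.not_even_iff_odd, Int.even_sub, Int.even_mul] at *
    tauto
  have h0 : q * u - (-v) * p = 1 := by linarith
  have h1 : q * (u + p) - (-v + q) * p = 1 := by linarith
  have k0 := key _ _ h0
  have k1 := key _ _ h1
  by_cases hc : (Odd q ∧ Even (-v)) ∨ (Even q ∧ Even u)
  · refine ⟨-v, u, h0, ?_⟩
    simp only [← Int.not_even_iff_odd] at *
    tauto
  · refine ⟨-v + q, u + p, h1, ?_⟩
    simp only [← Int.not_even_iff_odd, Int.even_add] at *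
    tauto

/-- With `d = gcd(n,j)` and `0 ≤ j < 2n`, there is `γ = (a, b; c, e) ∈ Γ₂` with `c ≠ 0` and
`a·n = c·j` (i.e. `γ·∞ = j/n`) if and only if `nj/d²` is even. -/
theorem cusp_equivalence_Gamma2 (n j : ℕ) (hn : 0 < n) (hj : j < 2 * n) :
    (∃ g : Matrix.SpecialLinearGroup (Fin 2) ℤ, memGamma2 g ∧ g 1 0 ≠ 0 ∧
      g 0 0 * (n : ℤ) = g 1 0 * (j : ℤ)) ↔ 2 ∣ (n * j / Nat.gcd n j ^ 2) := by
  obtain ⟨p, q, hcop, hnp, hjq⟩ := Nat.exists_coprime n j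
  have hd : 0 < Nat.gcd n j := Nat.gcd_pos_of_pos_left _ hn
  set d := Nat.gcd n j
  have hp : 0 < p := by
    rcases Nat.eq_zero_or_pos p with h | h
    · simp [h] at hnp; omega
    · exact h
  have hdiv : n * j / d ^ 2 = p * q := by
    rw [hnp, hjq, show p * d * (q * d) = p * q * d ^ 2 by ring]
    exact Nat.mul_div_cancel _ (by positivity)
  have hdz : (d : ℤ) ≠ 0 := by exact_mod_cast hd.ne'
  have hcast : Even ((p : ℤ) * q) ↔ 2 ∣ p * q := by
    rw [← even_iff_two_dvd]; exact_mod_cast Int.even_coe_nat (p * q)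
  have hnz : (n : ℤ) = p * d := by exact_mod_cast hnp
  have hjz : (j : ℤ) = q * d := by exact_mod_cast hjq
  rw [hdiv, ← hcast, hnz, hjz]
  constructor
  · rintro ⟨g, hg, -, h⟩
    have h' : g 0 0 * (p : ℤ) = g 1 0 * q := mul_right_cancel₀ hdz (by linarith)
    have hpar : Even (g 0 0 * (p : ℤ)) ↔ Even (g 1 0 * (q : ℤ)) := by rw [h']
    unfold memGamma2 at hg
    simp only [← Int.not_even_iff_odd, Int.even_mul] at *
    tauto
  · intro h
    obtain ⟨b, e, hdet, hmem⟩ :=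
      exists_second_column q p (Nat.isCoprime_iff_coprime.mpr hcop.symm) h
    refine ⟨⟨!![(q : ℤ), b; (p : ℤ), e], by rw [Matrix.det_fin_two_of, hdet]⟩, ?_, ?_, ?_⟩
    · simpa [memGamma2] using hmem
    · simpa using hp.ne'
    · simp; ring
end

section
/- Let n be a positive integer, write ν = ν₂(n) for its 2-adic valuation, and for 0 ≤ j < 2n define: ω_j = the least positive integer k with τ_j^{−1} n_k τ_j ∈ Γ₂; ω̃_j = the least positive integer k with τ̃_j^{−1} n_k τ̃_j ∈ Γ₂; ω′_j = the least positive integer k with τ_j^{−1} σ n_k σ τ_j ∈ Γ₂; ω̃′_j = the least positive integer k with τ̃_j^{−1} σ n_k σ τ̃_j ∈ Γ₂. Then Σ_{j=0}^{2n−1} log( ω_j · ω′_j · ω̃_j · ω̃′_j ) = 8n log(2n) − (2n log 2)/2^ν − 8 Σ_{a ∣ n} φ(n/a) log a, where φ is Euler's totient function. -/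
/-- A rational matrix "belongs to `Γ₂`" if it is (the image of) an integral matrix in `Γ₂`. -/
def memGamma2Q (M : Matrix (Fin 2) (Fin 2) ℚ) : Prop :=
  ∃ g : Matrix.SpecialLinearGroup (Fin 2) ℤ, memGamma2 g ∧
    ((g : Matrix (Fin 2) (Fin 2) ℤ).map (Int.cast : ℤ → ℚ)) = M

/-- `τ_j = (1, j/n; 0, 1)`. -/
def tauMat (n j : ℕ) : Matrix (Fin 2) (Fin 2) ℚ := !![1, (j : ℚ) / n; 0, 1]

/-- `τ̃_j = (1 + j/(2n), j/(2n); 1, 1)`. -/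
def tauTilMat (n j : ℕ) : Matrix (Fin 2) (Fin 2) ℚ :=
  !![1 + (j : ℚ) / (2 * n), (j : ℚ) / (2 * n); 1, 1]

/-- `σ = (0, 1; −1, 0)`. -/
def sigMat : Matrix (Fin 2) (Fin 2) ℚ := !![0, 1; -1, 0]

/-- `n_k = (1, k; 0, 1)`. -/
def nMat (k : ℕ) : Matrix (Fin 2) (Fin 2) ℚ := !![1, (k : ℚ); 0, 1]

/-- The parity condition defining `memGamma2`, on the entries of an integral matrix. -/
def gammaParity (a b c d : ℤ) : Prop :=
  (Odd a ∧ Even b ∧ Even c ∧ Odd d) ∨ (Even a ∧ Odd b ∧ Odd c ∧ Even d)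

lemma memGamma2Q_int {a b c d : ℤ} (h : a * d - b * c = 1) :
    memGamma2Q !![(a : ℚ), b; c, d] ↔ gammaParity a b c d := by
  constructor
  · rintro ⟨g, hg, e⟩
    have e00 := congrFun (congrFun e 0) 0
    have e01 := congrFun (congrFun e 0) 1
    have e10 := congrFun (congrFun e 1) 0
    have e11 := congrFun (congrFun e 1) 1
    simp at e00 e01 e10 e11
    unfold memGamma2 at hg
    rw [e00, e01, e10, e11] at hg
    exact hg
  · intro hp
    refine ⟨⟨!![a, b; c, d], by rw [Matrix.det_fin_two_of]; exact h⟩, hp, ?_⟩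
    ext i j
    fin_cases i <;> fin_cases j <;> simp

lemma memGamma2Q_entry {M : Matrix (Fin 2) (Fin 2) ℚ} (h : memGamma2Q M) :
    ∃ b : ℤ, (b : ℚ) = M 0 1 := by
  obtain ⟨g, -, rfl⟩ := h
  exact ⟨g 0 1, by simp⟩

/-- If `k x²` is an integer, where `x = p / q` in lowest terms, then `q² ∣ k`. -/
lemma sq_dvd_of_entry {p q k : ℕ} (hq : 0 < q) (hc : Nat.Coprime p q) {b : ℤ}
    (hb : (b : ℚ) = -(k * ((p : ℚ) / q) ^ 2)) : ∃ m, k = q ^ 2 * m := by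
  have hq' : (q : ℚ) ≠ 0 := by positivity
  have h1 : ((k : ℤ) * (p : ℤ) ^ 2) = (q : ℤ) ^ 2 * (-b) := by
    have : ((k : ℚ) * (p : ℚ) ^ 2) = (q : ℚ) ^ 2 * (-b) := by
      rw [hb]; field_simp
    exact_mod_cast this
  have h2 : (q : ℤ) ^ 2 ∣ (k : ℤ) * (p : ℤ) ^ 2 := ⟨_, h1⟩
  have h3 : q ^ 2 ∣ k * p ^ 2 := by exact_mod_cast h2
  exact (Nat.Coprime.pow 2 2 hc.symm).dvd_of_dvd_mul_right h3

/-- The conjugate `τ⁻¹ σ n_k σ τ`, where `τ` is the translation by `x`. -/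
lemma conj_tau (n j k : ℕ) {x : ℚ} (hx : (j : ℚ) / n = x) :
    (tauMat n j)⁻¹ * sigMat * nMat k * sigMat * tauMat n j =
      !![-1 - k * x, -(k * x ^ 2); (k : ℚ), k * x - 1] := by
  have : (tauMat n j)⁻¹ = !![1, -x; 0, 1] := by
    apply Matrix.inv_eq_left_inv
    rw [tauMat, hx, Matrix.one_fin_two]; simp
  rw [this, tauMat, hx, sigMat, nMat]
  simp only [Matrix.mul_fin_two]
  congr! 3 <;> ring_nf

lemma inv_tauTil (n j : ℕ) {x : ℚ} (hx : (j : ℚ) / (2 * n) = x) :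
    (tauTilMat n j)⁻¹ = !![1, -x; -1, 1 + x] := by
  apply Matrix.inv_eq_left_inv
  rw [tauTilMat, hx, Matrix.one_fin_two, Matrix.mul_fin_two]
  congr! 3 <;> ring_nf

/-- The conjugate `τ̃⁻¹ σ n_k σ τ̃`, where `τ̃` is the translation by `x` times `(1, 0; 1, 1)`. -/
lemma conj_tauTil (n j k : ℕ) {x : ℚ} (hx : (j : ℚ) / (2 * n) = x) :
    (tauTilMat n j)⁻¹ * sigMat * nMat k * sigMat * tauTilMat n j =
      !![-1 - k * x - k * x ^ 2, -(k * x ^ 2); k + 2 * (k * x) + k * x ^ 2,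
        k * x - 1 + k * x ^ 2] := by
  rw [inv_tauTil n j hx, tauTilMat, hx, sigMat, nMat]
  simp only [Matrix.mul_fin_two]
  congr! 3 <;> ring_nf

/-- With `k = q² m`, the conjugate is `(−1 − pqm, −p²m; q²m, pqm − 1)`, and the parities of these
entries decide membership in `Γ₂`. -/
lemma mem_conj_tau (n j k p q : ℕ) (hq : 0 < q) (hc : Nat.Coprime p q)
    (hx : (j : ℚ) / n = (p : ℚ) / q) :
    memGamma2Q ((tauMat n j)⁻¹ * sigMat * nMat k * sigMat * tauMat n j) ↔
      ∃ m, k = q ^ 2 * m ∧ (Even m ∨ (Odd p ∧ Odd q)) := by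
  have hq' : (q : ℚ) ≠ 0 := by positivity
  have hnot : ¬ (Even p ∧ Even q) := by
    rintro ⟨h1, h2⟩
    exact Nat.not_coprime_of_dvd_of_dvd (by norm_num) h1.two_dvd h2.two_dvd hc
  have key : ∀ m : ℕ, k = q ^ 2 * m →
      (memGamma2Q ((tauMat n j)⁻¹ * sigMat * nMat k * sigMat * tauMat n j) ↔
        (Even m ∨ (Odd p ∧ Odd q))) := by
    rintro m rfl
    have hM : (tauMat n j)⁻¹ * sigMat * nMat (q ^ 2 * m) * sigMat * tauMat n j =
        !![((-1 - p * q * m : ℤ) : ℚ), ((-(p ^ 2 * m) : ℤ) : ℚ);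
          ((q ^ 2 * m : ℤ) : ℚ), ((p * q * m - 1 : ℤ) : ℚ)] := by
      rw [conj_tau n j _ hx]
      push_cast
      congr! 3 <;> field_simp
    rw [hM, memGamma2Q_int (by ring)]
    unfold gammaParity
    rcases Nat.even_or_odd p with h1 | h1 <;> rcases Nat.even_or_odd q with h2 | h2 <;>
      rcases Nat.even_or_odd m with h3 | h3 <;>
      simp_all [parity_simps, ← Nat.not_even_iff_odd, ← Int.not_even_iff_odd]
  constructor
  · intro h
    obtain ⟨b, hb⟩ := memGamma2Q_entry h
    rw [conj_tau n j k hx] at hb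
    obtain ⟨m, hm⟩ := sq_dvd_of_entry hq hc hb
    exact ⟨m, hm, (key m hm).1 h⟩
  · rintro ⟨m, hm, h⟩
    exact (key m hm).2 h

/-- The analogue of `mem_conj_tau` for `τ̃_j`, whose translation parameter is `j / (2n)`. -/
lemma mem_conj_tauTil (n j k p q : ℕ) (hq : 0 < q) (hc : Nat.Coprime p q)
    (hx : (j : ℚ) / (2 * n) = (p : ℚ) / q) :
    memGamma2Q ((tauTilMat n j)⁻¹ * sigMat * nMat k * sigMat * tauTilMat n j) ↔
      ∃ m, k = q ^ 2 * m ∧ (Even m ∨ Even q) := by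
  have hq' : (q : ℚ) ≠ 0 := by positivity
  have hnot : ¬ (Even p ∧ Even q) := by
    rintro ⟨h1, h2⟩
    exact Nat.not_coprime_of_dvd_of_dvd (by norm_num) h1.two_dvd h2.two_dvd hc
  have key : ∀ m : ℕ, k = q ^ 2 * m →
      (memGamma2Q ((tauTilMat n j)⁻¹ * sigMat * nMat k * sigMat * tauTilMat n j) ↔
        (Even m ∨ Even q)) := by
    rintro m rfl
    have hM : (tauTilMat n j)⁻¹ * sigMat * nMat (q ^ 2 * m) * sigMat * tauTilMat n j =
        !![((-1 - p * q * m - p ^ 2 * m : ℤ) : ℚ), ((-(p ^ 2 * m) : ℤ) : ℚ);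
          ((q ^ 2 * m + 2 * (p * q * m) + p ^ 2 * m : ℤ) : ℚ),
          ((p * q * m - 1 + p ^ 2 * m : ℤ) : ℚ)] := by
      rw [conj_tauTil n j _ hx]
      push_cast
      congr! 3 <;> field_simp
    rw [hM, memGamma2Q_int (by ring)]
    unfold gammaParity
    rcases Nat.even_or_odd p with h1 | h1 <;> rcases Nat.even_or_odd q with h2 | h2 <;>
      rcases Nat.even_or_odd m with h3 | h3 <;>
      simp_all [parity_simps, ← Nat.not_even_iff_odd, ← Int.not_even_iff_odd]
  constructor
  · intro h
    obtain ⟨b, hb⟩ := memGamma2Q_entry h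
    rw [conj_tauTil n j k hx] at hb
    obtain ⟨m, hm⟩ := sq_dvd_of_entry hq hc hb
    exact ⟨m, hm, (key m hm).1 h⟩
  · rintro ⟨m, hm, h⟩
    exact (key m hm).2 h

open Classical in
lemma least_eq {q w : ℕ} (hq : 0 < q) {P : Prop}
    (h : IsLeast {k : ℕ | 0 < k ∧ ∃ m, k = q ^ 2 * m ∧ (Even m ∨ P)} w) :
    w = q ^ 2 * (if P then 1 else 2) := by
  refine h.unique ⟨⟨by split_ifs <;> positivity, _, rfl, ?_⟩, ?_⟩
  · split_ifs with hP <;> simp [hP]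
  · rintro k ⟨hk, m, rfl, hm⟩
    have hm0 : 0 < m := Nat.pos_of_mul_pos_left hk
    apply Nat.mul_le_mul_left
    split_ifs with hP
    · exact hm0
    · rcases hm with ⟨r, rfl⟩ | hm
      · omega
      · exact absurd hm hP

lemma width_tau {n j w : ℕ}
    (h : IsLeast {k : ℕ | 0 < k ∧ memGamma2Q ((tauMat n j)⁻¹ * nMat k * tauMat n j)} w) :
    w = 2 := by
  have hM : ∀ k : ℕ, memGamma2Q ((tauMat n j)⁻¹ * nMat k * tauMat n j) ↔ Even k := by
    intro k
    have hi : (tauMat n j)⁻¹ = !![1, -((j : ℚ) / n); 0, 1] := by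
      apply Matrix.inv_eq_left_inv
      rw [tauMat, Matrix.one_fin_two]; simp
    have : (tauMat n j)⁻¹ * nMat k * tauMat n j =
        !![((1 : ℤ) : ℚ), ((k : ℤ) : ℚ); ((0 : ℤ) : ℚ), ((1 : ℤ) : ℚ)] := by
      rw [hi, tauMat, nMat]
      simp only [Matrix.mul_fin_two]
      push_cast
      congr! 3 <;> ring_nf
    rw [this, memGamma2Q_int (by ring)]
    simp [gammaParity]
  simp only [hM] at h
  refine h.unique ⟨⟨by norm_num, even_two⟩, ?_⟩
  rintro k ⟨hk, r, rfl⟩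
  omega

lemma width_tauTil {n j w : ℕ}
    (h : IsLeast {k : ℕ | 0 < k ∧
      memGamma2Q ((tauTilMat n j)⁻¹ * nMat k * tauTilMat n j)} w) :
    w = 1 := by
  have hM : memGamma2Q ((tauTilMat n j)⁻¹ * nMat 1 * tauTilMat n j) := by
    have : (tauTilMat n j)⁻¹ * nMat 1 * tauTilMat n j =
        !![((2 : ℤ) : ℚ), ((1 : ℤ) : ℚ); ((-1 : ℤ) : ℚ), ((0 : ℤ) : ℚ)] := by
      rw [inv_tauTil n j rfl, tauTilMat, nMat]
      simp only [Matrix.mul_fin_two]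
      push_cast
      congr! 3 <;> ring_nf
    rw [this, memGamma2Q_int (by ring)]
    simp [gammaParity]
  exact h.unique ⟨⟨one_pos, hM⟩, fun k hk => hk.1⟩

/-- The product of the four widths, when `j / n = p / q` in lowest terms. -/
lemma width_prod {n j p q w wt w' wt' : ℕ} (hq : 0 < q) (hc : Nat.Coprime p q)
    (hx : (j : ℚ) / n = (p : ℚ) / q)
    (hw : IsLeast {k : ℕ | 0 < k ∧
      memGamma2Q ((tauMat n j)⁻¹ * nMat k * tauMat n j)} w)
    (hwt : IsLeast {k : ℕ | 0 < k ∧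
      memGamma2Q ((tauTilMat n j)⁻¹ * nMat k * tauTilMat n j)} wt)
    (hw' : IsLeast {k : ℕ | 0 < k ∧
      memGamma2Q ((tauMat n j)⁻¹ * sigMat * nMat k * sigMat * tauMat n j)} w')
    (hwt' : IsLeast {k : ℕ | 0 < k ∧
      memGamma2Q ((tauTilMat n j)⁻¹ * sigMat * nMat k * sigMat * tauTilMat n j)} wt') :
    w * w' * wt * wt' * (if Odd q then 2 else 1) = (2 * q) ^ 4 := by
  have hq' : (q : ℚ) ≠ 0 := by positivity
  rw [width_tau hw, width_tauTil hwt]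
  simp only [mem_conj_tau n j _ p q hq hc hx] at hw'
  rw [least_eq hq hw']
  have hx2 : (j : ℚ) / (2 * n) = (p : ℚ) / q / 2 := by rw [← hx]; ring
  -- In lowest terms `j / (2n)` is `(p / 2) / q` for even `p`, and `p / (2q)` for odd `p`.
  rcases Nat.even_or_odd p with hp | hp
  · obtain ⟨r, rfl⟩ := hp
    have hqo : Odd q := by
      by_contra h
      rw [Nat.not_odd_iff_even] at h
      exact Nat.not_coprime_of_dvd_of_dvd (by norm_num) ⟨r, by ring⟩ h.two_dvd hc
    have hc' : Nat.Coprime r q := hc.coprime_dvd_left ⟨2, by ring⟩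
    simp only [mem_conj_tauTil n j _ r q hq hc' (by rw [hx2]; push_cast; ring)] at hwt'
    rw [least_eq hq hwt']
    rw [if_neg (Nat.not_even_iff_odd.2 hqo), if_pos hqo]
    simp [Nat.not_odd_iff_even.2 (⟨r, rfl⟩ : Even (r + r))]
    ring
  · have hc' : Nat.Coprime p (2 * q) := Nat.Coprime.mul_right hp.coprime_two_right hc
    simp only [mem_conj_tauTil n j _ p (2 * q) (by omega) hc'
      (by rw [hx2]; push_cast; field_simp)] at hwt'
    rw [least_eq (by omega) hwt']
    by_cases hqo : Odd q <;> simp [hqo, hp] <;> ring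

lemma odd_div_gcd_iff {n : ℕ} (hn : 0 < n) (j : ℕ) :
    Odd (n / Nat.gcd j n) ↔ 2 ^ padicValNat 2 n ∣ j := by
  have hg : Nat.gcd j n ∣ n := Nat.gcd_dvd_right j n
  obtain ⟨q, hq⟩ := hg
  have hg0 : 0 < Nat.gcd j n := Nat.gcd_pos_of_pos_right j hn
  have hq0 : q ≠ 0 := by rintro rfl; omega
  have hdiv : n / Nat.gcd j n = q := Nat.div_eq_of_eq_mul_right hg0 hq
  have hv : padicValNat 2 n = padicValNat 2 (Nat.gcd j n) + padicValNat 2 q := by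
    conv_lhs => rw [hq]
    exact padicValNat.mul hg0.ne' hq0
  have h1 : 2 ^ padicValNat 2 n ∣ j ↔ 2 ^ padicValNat 2 n ∣ Nat.gcd j n :=
    ⟨fun h => Nat.dvd_gcd h pow_padicValNat_dvd, fun h => h.trans (Nat.gcd_dvd_left j n)⟩
  rw [hdiv, h1, padicValNat_dvd_iff_le hg0.ne', hv, ← Nat.not_even_iff_odd, even_iff_two_dvd,
    dvd_iff_padicValNat_ne_zero hq0]
  omega

lemma card_multiples (d m : ℕ) (hd : 0 < d) :
    ((Finset.range (d * m)).filter (fun j => d ∣ j)).card = m := by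
  have : (Finset.range (d * m)).filter (fun j => d ∣ j) = (Finset.range m).image (d * ·) := by
    ext j
    simp only [Finset.mem_filter, Finset.mem_range, Finset.mem_image]
    constructor
    · rintro ⟨h, r, rfl⟩
      exact ⟨r, lt_of_mul_lt_mul_left h (Nat.zero_le d), rfl⟩
    · rintro ⟨r, h, rfl⟩
      exact ⟨Nat.mul_lt_mul_of_pos_left h hd, dvd_mul_right d r⟩
  rw [this, Finset.card_image_of_injective _ (fun a b h => Nat.eq_of_mul_eq_mul_left hd h),
    Finset.card_range]

/-- Over a period, `gcd(j, n) = a` occurs `φ(n / a)` times for each `a ∣ n`. -/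
lemma sum_log_gcd {n : ℕ} (hn : 0 < n) :
    ∑ j ∈ Finset.range n, Real.log (Nat.gcd j n) =
      ∑ a ∈ n.divisors, (Nat.totient (n / a) : ℝ) * Real.log a := by
  rw [← Finset.sum_fiberwise_of_maps_to (s := Finset.range n) (t := n.divisors)
    (g := fun j => Nat.gcd n j)
    (fun j _ => Nat.mem_divisors.2 ⟨Nat.gcd_dvd_left n j, hn.ne'⟩)]
  refine Finset.sum_congr rfl fun a ha => ?_
  rw [Nat.totient_div_of_dvd (Nat.dvd_of_mem_divisors ha), ← nsmul_eq_mul, ← Finset.sum_const]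
  refine Finset.sum_congr rfl fun j hj => ?_
  rw [Nat.gcd_comm, (Finset.mem_filter.1 hj).2]

/-- The cusp-width sum: if `ω_j, ω̃_j, ω′_j, ω̃′_j` are the least positive integers `k` with
`τ_j⁻¹ n_k τ_j ∈ Γ₂`, `τ̃_j⁻¹ n_k τ̃_j ∈ Γ₂`, `τ_j⁻¹ σ n_k σ τ_j ∈ Γ₂`, `τ̃_j⁻¹ σ n_k σ τ̃_j ∈ Γ₂`
respectively, then, with `ν = ν₂(n)`,
`Σ_{j=0}^{2n−1} log(ω_j ω′_j ω̃_j ω̃′_j) = 8n log(2n) − 2n log 2 / 2^ν − 8 Σ_{a∣n} φ(n/a) log a`. -/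
theorem sum_log_cusp_widths (n : ℕ) (hn : 0 < n) (ω ωt ω' ωt' : ℕ → ℕ)
    (hω : ∀ j < 2 * n, IsLeast {k : ℕ | 0 < k ∧
      memGamma2Q ((tauMat n j)⁻¹ * nMat k * tauMat n j)} (ω j))
    (hωt : ∀ j < 2 * n, IsLeast {k : ℕ | 0 < k ∧
      memGamma2Q ((tauTilMat n j)⁻¹ * nMat k * tauTilMat n j)} (ωt j))
    (hω' : ∀ j < 2 * n, IsLeast {k : ℕ | 0 < k ∧
      memGamma2Q ((tauMat n j)⁻¹ * sigMat * nMat k * sigMat * tauMat n j)} (ω' j))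
    (hωt' : ∀ j < 2 * n, IsLeast {k : ℕ | 0 < k ∧
      memGamma2Q ((tauTilMat n j)⁻¹ * sigMat * nMat k * sigMat * tauTilMat n j)} (ωt' j)) :
    ∑ j ∈ Finset.range (2 * n), Real.log ((ω j : ℝ) * ω' j * ωt j * ωt' j) =
      8 * n * Real.log (2 * n) - 2 * n * Real.log 2 / 2 ^ (padicValNat 2 n)
        - 8 * ∑ a ∈ n.divisors, (Nat.totient (n / a) : ℝ) * Real.log a := by
  have hn' : (n : ℝ) ≠ 0 := by positivity
  have hterm : ∀ j ∈ Finset.range (2 * n), Real.log ((ω j : ℝ) * ω' j * ωt j * ωt' j) =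
      4 * Real.log (2 * n) - 4 * Real.log (Nat.gcd j n)
        - (if 2 ^ padicValNat 2 n ∣ j then Real.log 2 else 0) := by
    intro j hj
    rw [Finset.mem_range] at hj
    have hg0 : 0 < Nat.gcd j n := Nat.gcd_pos_of_pos_right j hn
    set g := Nat.gcd j n with hg
    have hgn : g ∣ n := Nat.gcd_dvd_right j n
    have hgj : g ∣ j := Nat.gcd_dvd_left j n
    have hq0 : 0 < n / g := Nat.div_pos (Nat.le_of_dvd hn hgn) hg0
    have hgR : (g : ℝ) ≠ 0 := by positivity
    have hgQ : (g : ℚ) ≠ 0 := by positivity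
    have hprod := width_prod (p := j / g) (q := n / g) hq0 (Nat.coprime_div_gcd_div_gcd hg0)
      (by rw [Nat.cast_div hgj hgQ, Nat.cast_div hgn hgQ]; field_simp)
      (hω j hj) (hωt j hj) (hω' j hj) (hωt' j hj)
    have hprodR : ((ω j : ℝ) * ω' j * ωt j * ωt' j) * (if Odd (n / g) then 2 else 1) =
        (2 * n / g) ^ 4 := by
      have := congrArg (Nat.cast : ℕ → ℝ) hprod
      push_cast [Nat.cast_div hgn hgR] at this
      rw [this]; ring
    have hP : (ω j : ℝ) * ω' j * ωt j * ωt' j ≠ 0 := by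
      intro h0
      rw [h0, zero_mul] at hprodR
      exact absurd hprodR.symm (by positivity)
    have hlog := congrArg Real.log hprodR
    rw [Real.log_mul hP (by split_ifs <;> norm_num), Real.log_pow,
      Real.log_div (by positivity) hgR] at hlog
    have hodd := odd_div_gcd_iff hn j
    rw [← hg] at hodd
    simp only [← hodd]
    split_ifs at hlog ⊢
    · push_cast at hlog; linarith
    · rw [Real.log_one] at hlog; push_cast at hlog; linarith
  have hgcd : ∑ j ∈ Finset.range (2 * n), Real.log (Nat.gcd j n) =
      2 * ∑ a ∈ n.divisors, (Nat.totient (n / a) : ℝ) * Real.log a := by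
    rw [two_mul n, Finset.sum_range_add]
    simp only [Nat.gcd_self_add_left, sum_log_gcd hn]
    ring
  have hcount : ∑ j ∈ Finset.range (2 * n),
      (if 2 ^ padicValNat 2 n ∣ j then Real.log 2 else 0) =
        2 * n * Real.log 2 / 2 ^ (padicValNat 2 n) := by
    obtain ⟨m, hm⟩ := pow_padicValNat_dvd (p := 2) (n := n)
    have h2n : 2 * n = 2 ^ padicValNat 2 n * (2 * m) := by
      conv_lhs => rw [hm]
      ring
    have hR : (2 : ℝ) * n = 2 ^ padicValNat 2 n * (2 * m) := by exact_mod_cast h2n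
    have hcard : ((Finset.range (2 * n)).filter (fun j => 2 ^ padicValNat 2 n ∣ j)).card
        = 2 * m := by
      have := card_multiples (2 ^ padicValNat 2 n) (2 * m) (by positivity)
      rwa [← h2n] at this
    rw [← Finset.sum_filter, Finset.sum_const, nsmul_eq_mul, hcard, hR]
    push_cast
    field_simp
  rw [Finset.sum_congr rfl hterm, Finset.sum_sub_distrib, Finset.sum_sub_distrib,
    Finset.sum_const, ← Finset.mul_sum, hgcd, hcount, Finset.card_range, nsmul_eq_mul]
  push_cast
  ring
end

section
/- Let n be a positive integer and T ≥ 0 a real number. Then 2 · 𝒩_{Q,n²}(T) = Σ_{j=0}^{n−1} #{ γ ∈ SL₂(ℤ) : 2a′² + b′² + 2c′² ≤ T², where (a′, b′, c′) = (0, n, j)·γ }. -/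
/-- `𝒩_{Q,d}(T)`: the number of integer triples `(a,b,c)` with `b² − 4ac = d` and
`2a² + b² + 2c² ≤ T²`. -/
noncomputable def formCount (d : ℕ) (T : ℝ) : ℕ :=
  Nat.card {v : ℤ × ℤ × ℤ //
    v.2.1 ^ 2 - 4 * v.1 * v.2.2 = (d : ℤ) ∧
    ((2 * v.1 ^ 2 + v.2.1 ^ 2 + 2 * v.2.2 ^ 2 : ℤ) : ℝ) ≤ T ^ 2}

open Matrix

lemma mul_entry (g h : SpecialLinearGroup (Fin 2) ℤ) (i k : Fin 2) :
    (g * h) i k = g i 0 * h 0 k + g i 1 * h 1 k := by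
  change (g.1 * h.1) i k = _
  rw [Matrix.mul_apply, Fin.sum_univ_two]

lemma formAct_mul (v : ℤ × ℤ × ℤ) (g h : SpecialLinearGroup (Fin 2) ℤ) :
    formAct v (g * h) = formAct (formAct v g) h := by
  simp only [formAct, mul_entry, Prod.mk.injEq]
  refine ⟨?_, ?_, ?_⟩ <;> ring

lemma formAct_one (v : ℤ × ℤ × ℤ) : formAct v 1 = v := by
  simp [formAct]

lemma formAct_neg (v : ℤ × ℤ × ℤ) (g : SpecialLinearGroup (Fin 2) ℤ) :
    formAct v (-g) = formAct v g := by
  simp [formAct]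

lemma det_eq (g : SpecialLinearGroup (Fin 2) ℤ) : g 0 0 * g 1 1 - g 0 1 * g 1 0 = 1 := by
  rw [← Matrix.det_fin_two]
  exact g.det_coe

lemma disc_formAct (v : ℤ × ℤ × ℤ) (g : SpecialLinearGroup (Fin 2) ℤ) :
    (formAct v g).2.1 ^ 2 - 4 * (formAct v g).1 * (formAct v g).2.2
      = v.2.1 ^ 2 - 4 * v.1 * v.2.2 := by
  have h := det_eq g
  calc _ = (v.2.1 ^ 2 - 4 * v.1 * v.2.2) * (g 0 0 * g 1 1 - g 0 1 * g 1 0) ^ 2 := by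
        simp only [formAct]; ring
    _ = _ := by rw [h]; ring

/-- A form `(a, b, c)` of discriminant `n²` has a primitive zero `(p, q)` whose polar form is
`n` times the determinant against `(p, q)`; the two linear equations express this. -/
lemma exists_primitive_zero (n a b c : ℤ) (hn : 0 < n) (hd : b ^ 2 - 4 * a * c = n ^ 2) :
    ∃ p q : ℤ, IsCoprime p q ∧ 2 * a * p + b * q = -n * q ∧ b * p + 2 * c * q = n * p := by
  obtain ⟨p, q, h0, h1, h2⟩ : ∃ p q : ℤ, (p ≠ 0 ∨ q ≠ 0) ∧
      2 * a * p + b * q = -n * q ∧ b * p + 2 * c * q = n * p := by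
    by_cases h : n + b ≠ 0 ∨ -2 * a ≠ 0
    · exact ⟨n + b, -2 * a, h, by ring, by linear_combination hd⟩
    · push Not at h
      obtain rfl : a = 0 := by omega
      obtain rfl : b = -n := by omega
      exact ⟨c, n, Or.inr hn.ne', by ring, by ring⟩
  have hg : 0 < Int.gcd p q := Int.gcd_pos_iff.2 h0
  obtain ⟨p', q', hc, hp, hq⟩ := Int.exists_gcd_one hg
  have hg' : (Int.gcd p q : ℤ) ≠ 0 := by exact_mod_cast hg.ne'
  generalize (Int.gcd p q : ℤ) = d at *
  subst hp hq
  refine ⟨p', q', Int.isCoprime_iff_gcd_eq_one.2 hc, ?_, ?_⟩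
  · exact mul_right_cancel₀ hg' (by linear_combination h1)
  · exact mul_right_cancel₀ hg' (by linear_combination h2)

lemma exists_rep (n : ℕ) (hn : 0 < n) (v : ℤ × ℤ × ℤ)
    (hv : v.2.1 ^ 2 - 4 * v.1 * v.2.2 = ((n ^ 2 : ℕ) : ℤ)) :
    ∃ (j : Fin n) (g : SpecialLinearGroup (Fin 2) ℤ), formAct (0, (n : ℤ), ((j : ℕ) : ℤ)) g = v := by
  obtain ⟨a, b, c⟩ := v
  have hn' : (0 : ℤ) < n := by exact_mod_cast hn
  obtain ⟨p, q, ⟨u, w, huw⟩, h1, h2⟩ :=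
    exists_primitive_zero n a b c hn' (by simpa using hv)
  let h : SpecialLinearGroup (Fin 2) ℤ :=
    ⟨!![p, -w; q, u], by rw [Matrix.det_fin_two_of]; linear_combination huw⟩
  -- Moving the primitive zero to `(1, 0)` gives a form `(0, n, e)`.
  obtain ⟨e, he⟩ : ∃ e, formAct (a, b, c) h = (0, (n : ℤ), e) := by
    refine ⟨_, Prod.ext ?_ (Prod.ext ?_ rfl)⟩
    · have : 2 * (a * p ^ 2 + b * p * q + c * q ^ 2) = 0 := by linear_combination p * h1 + q * h2
      simp [h, formAct]
      linarith
    · simp [h, formAct]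
      linear_combination (-w) * h1 + u * h2 + (n : ℤ) * huw
  let t : SpecialLinearGroup (Fin 2) ℤ :=
    ⟨!![1, -(e / n); 0, 1], by simp [Matrix.det_fin_two_of]⟩
  have hmod0 := Int.emod_nonneg e hn'.ne'
  have hmod1 := Int.emod_lt_of_pos e hn'
  have ht : formAct (0, (n : ℤ), e) t = (0, (n : ℤ), e % n) := by
    simp [t, formAct, Int.emod_def]
    ring
  refine ⟨⟨(e % n).toNat, by omega⟩, (h * t)⁻¹, ?_⟩
  simp only [Int.toNat_of_nonneg hmod0]
  rw [← ht, ← he, ← formAct_mul, ← formAct_mul, ← mul_assoc, mul_inv_cancel, formAct_one]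

/-- The forms `(0, n, j)`, `0 ≤ j < n`, are pairwise inequivalent with stabilizer `{±I}`. -/
lemma stab_rep (n : ℕ) (hn : 0 < n) (j k : Fin n) (g : SpecialLinearGroup (Fin 2) ℤ)
    (h : formAct (0, (n : ℤ), ((j : ℕ) : ℤ)) g = (0, (n : ℤ), ((k : ℕ) : ℤ))) :
    j = k ∧ (g = 1 ∨ g = -1) := by
  have hn' : (0 : ℤ) < n := by exact_mod_cast hn
  have hd := det_eq g
  have hj := j.2
  have hk := k.2
  simp only [formAct, Prod.mk.injEq] at h
  obtain ⟨h1, h2, h3⟩ := h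
  have hc : g 1 0 = 0 := by
    by_contra hc
    have h4 : (n : ℤ) * g 0 0 + (j : ℕ) * g 1 0 = 0 :=
      mul_right_cancel₀ hc (by linear_combination h1)
    have : (n : ℤ) = -n := by
      linear_combination -h2 + 2 * g 1 1 * h4 - (n : ℤ) * hd
    omega
  rw [hc] at hd
  have hu : g 0 0 * g 1 1 = 1 := by linear_combination hd
  -- `k = j + n t` with both in `[0, n)` forces `t = 0`.
  have key : ∀ t : ℤ, (n : ℤ) * t + (j : ℕ) = (k : ℕ) → t = 0 := by
    intro t ht
    have : t < 1 := by nlinarith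
    have : -1 < t := by nlinarith
    omega
  rcases Int.eq_one_or_neg_one_of_mul_eq_one' hu with ⟨ha, hδ⟩ | ⟨ha, hδ⟩
  · rw [hδ] at h3
    have h0 := key (g 0 1) (by linear_combination h3)
    rw [h0] at h3
    refine ⟨Fin.ext (by push_cast at h3; omega), Or.inl ?_⟩
    ext i l
    fin_cases i <;> fin_cases l <;> simp [*]
  · rw [hδ] at h3
    have h0 : g 0 1 = 0 := neg_eq_zero.1 (key (-g 0 1) (by linear_combination h3))
    rw [h0] at h3
    refine ⟨Fin.ext (by push_cast at h3; omega), Or.inr ?_⟩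
    ext i l
    fin_cases i <;> fin_cases l <;> simp [*]

lemma rep_unique (n : ℕ) (hn : 0 < n) (j k : Fin n) (g h : SpecialLinearGroup (Fin 2) ℤ)
    (e : formAct (0, (n : ℤ), ((j : ℕ) : ℤ)) g = formAct (0, (n : ℤ), ((k : ℕ) : ℤ)) h) :
    j = k ∧ (g = h ∨ g = -h) := by
  have := stab_rep n hn j k (g * h⁻¹) (by
    rw [formAct_mul, e, ← formAct_mul, mul_inv_cancel, formAct_one])
  refine ⟨this.1, this.2.imp mul_inv_eq_one.1 fun h' => ?_⟩
  rw [mul_inv_eq_iff_eq_mul.1 h', neg_one_mul]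

lemma ne_neg_self (g : SpecialLinearGroup (Fin 2) ℤ) : g ≠ -g := by
  intro h
  have hd := det_eq g
  have h0 : g 0 0 = -g 0 0 := congrArg (fun x : SpecialLinearGroup (Fin 2) ℤ => x 0 0) h
  have h1 : g 0 1 = -g 0 1 := congrArg (fun x : SpecialLinearGroup (Fin 2) ℤ => x 0 1) h
  rw [show g 0 0 = 0 by omega, show g 0 1 = 0 by omega] at hd
  simp at hd

lemma finite_bounded (d : ℤ) (T : ℝ) :
    Finite {v : ℤ × ℤ × ℤ // v.2.1 ^ 2 - 4 * v.1 * v.2.2 = d ∧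
      ((2 * v.1 ^ 2 + v.2.1 ^ 2 + 2 * v.2.2 ^ 2 : ℤ) : ℝ) ≤ T ^ 2} := by
  let M : ℤ := ⌊T ^ 2⌋
  refine ((Set.finite_Icc ((-M, -M, -M) : ℤ × ℤ × ℤ) (M, M, M)).subset ?_).to_subtype
  rintro ⟨a, b, c⟩ ⟨-, h⟩
  have hM : 2 * a ^ 2 + b ^ 2 + 2 * c ^ 2 ≤ M := Int.le_floor.2 h
  have sq (x : ℤ) : x ≤ x ^ 2 ∧ -x ≤ x ^ 2 :=
    ⟨Int.le_self_sq x, by simpa using Int.le_self_sq (-x)⟩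
  have ha := sq a
  have hb := sq b
  have hc := sq c
  have := sq_nonneg a
  have := sq_nonneg b
  have := sq_nonneg c
  simp only [Set.mem_Icc, Prod.mk_le_mk]
  refine ⟨⟨?_, ?_, ?_⟩, ?_, ?_, ?_⟩ <;> linarith

/-- Orbit decomposition of the count: `2·𝒩_{Q,n²}(T)` equals the sum over `0 ≤ j < n` of the
number of `γ ∈ SL₂(ℤ)` with `2a′² + b′² + 2c′² ≤ T²`, where `(a′,b′,c′) = (0,n,j)·γ`
(the factor `2` accounting for the stabilizer `{±I}` of each `(0,n,j)`). -/
theorem count_eq_sum_orbit_counts (n : ℕ) (hn : 0 < n) (T : ℝ) (hT : 0 ≤ T) :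
    2 * formCount (n ^ 2) T =
      ∑ j ∈ Finset.range n, Nat.card {γ : Matrix.SpecialLinearGroup (Fin 2) ℤ //
        ((2 * (formAct (0, (n : ℤ), (j : ℤ)) γ).1 ^ 2
          + (formAct (0, (n : ℤ), (j : ℤ)) γ).2.1 ^ 2
          + 2 * (formAct (0, (n : ℤ), (j : ℤ)) γ).2.2 ^ 2 : ℤ) : ℝ) ≤ T ^ 2} := by
  rw [formCount]
  let A := {v : ℤ × ℤ × ℤ // v.2.1 ^ 2 - 4 * v.1 * v.2.2 = ((n ^ 2 : ℕ) : ℤ) ∧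
    ((2 * v.1 ^ 2 + v.2.1 ^ 2 + 2 * v.2.2 ^ 2 : ℤ) : ℝ) ≤ T ^ 2}
  let B (j : ℕ) := {γ : SpecialLinearGroup (Fin 2) ℤ //
    ((2 * (formAct (0, (n : ℤ), (j : ℤ)) γ).1 ^ 2
      + (formAct (0, (n : ℤ), (j : ℤ)) γ).2.1 ^ 2
      + 2 * (formAct (0, (n : ℤ), (j : ℤ)) γ).2.2 ^ 2 : ℤ) : ℝ) ≤ T ^ 2}
  change 2 * Nat.card A = ∑ j ∈ Finset.range n, Nat.card (B j)
  have : Finite A := finite_bounded _ _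
  choose J G hG using fun v : A => exists_rep n hn v.1 v.2.1
  -- The sign `ε` selects one of the two matrices `±G v` carrying `(0, n, J v)` to `v`.
  let S (ε : Bool) (g : SpecialLinearGroup (Fin 2) ℤ) := if ε then g else -g
  have hS (v : A) (ε : Bool) :
      formAct (0, (n : ℤ), ((J v : ℕ) : ℤ)) (S ε (G v)) = v.1 := by
    cases ε <;> simp [S, formAct_neg, hG]
  let f : A × Bool → Σ j : Fin n, B j := fun x =>
    ⟨J x.1, S x.2 (G x.1), by rw [hS]; exact x.1.2.2⟩
  have hf : Function.Bijective f := by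
    constructor
    · rintro ⟨v, ε⟩ ⟨w, η⟩ h
      have hval : ∀ x, formAct (0, (n : ℤ), (((f x).1 : ℕ) : ℤ)) (f x).2.1 = x.1.1 :=
        fun x => hS x.1 x.2
      have hvw : v = w := Subtype.ext (by rw [← hval (v, ε), ← hval (w, η), h])
      subst hvw
      have hs : S ε (G v) = S η (G v) :=
        congrArg (fun y : Σ j : Fin n, B j => y.2.1) h
      have h1 := ne_neg_self (G v)
      cases ε <;> cases η <;> simp [S, h1, h1.symm] at hs ⊢
    · have key (v : A) (j : Fin n) (b : B j)
          (e : formAct (0, (n : ℤ), ((j : ℕ) : ℤ)) b.1 = v.1) : ∃ x, f x = ⟨j, b⟩ := by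
        obtain ⟨rfl, h⟩ := rep_unique n hn j (J v) b.1 (G v) (e.trans (hG v).symm)
        rcases h with h | h
        · exact ⟨(v, true), Sigma.ext rfl (heq_of_eq (Subtype.ext h.symm))⟩
        · exact ⟨(v, false), Sigma.ext rfl (heq_of_eq (Subtype.ext h.symm))⟩
      rintro ⟨j, b⟩
      exact key ⟨formAct (0, (n : ℤ), ((j : ℕ) : ℤ)) b.1,
        by rw [disc_formAct]; push_cast; ring, b.2⟩ j b rfl
  have : Finite (Σ j : Fin n, B j) := Finite.of_surjective f hf.2
  have (j : Fin n) : Finite (B j) :=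
    Finite.of_injective (fun b => (⟨j, b⟩ : Σ j : Fin n, B j))
      (sigma_mk_injective (β := fun j : Fin n => B j))
  rw [← Fin.sum_univ_eq_sum_range (fun j => Nat.card (B j)), ← Nat.card_sigma,
    ← Nat.card_congr (Equiv.ofBijective f hf), Nat.card_prod, mul_comm]
  simp
end

section
/- Let n be a positive integer. Then every triple (a,b,c) ∈ ℤ³ with gcd(a, b, c) = 1 and b² − 4ac = n² lies in the SL₂(ℤ)-orbit of exactly one of the triples (0, n, j) with 0 ≤ j < n and gcd(j, n) = 1. -/
/-- An integer `2 × 2` matrix `(a, m; m', c)` of determinant zero with coprime entries is an outer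
product `(p, q)ᵗ (γ, δ)` in which `(γ, δ)` is primitive. -/
lemma exists_rank_one (a m m' c : ℤ) (hdet : a * c = m * m')
    (hprim : ∀ d : ℤ, d ∣ a → d ∣ m → d ∣ m' → d ∣ c → IsUnit d) :
    ∃ p q γ δ : ℤ, IsCoprime γ δ ∧ a = p * γ ∧ m = p * δ ∧ m' = q * γ ∧ c = q * δ := by
  by_cases h0 : a = 0 ∧ m = 0
  · obtain ⟨rfl, rfl⟩ := h0
    refine ⟨0, 1, m', c, ?_, by ring, by ring, by ring, by ring⟩
    rw [Int.isCoprime_iff_gcd_eq_one]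
    have := hprim (Int.gcd m' c) (dvd_zero _) (dvd_zero _) (Int.gcd_dvd_left ..)
      (Int.gcd_dvd_right ..)
    simpa [Int.isUnit_iff_natAbs_eq] using this
  · have hg : 0 < Int.gcd a m := by
      rw [Int.gcd_pos_iff]
      tauto
    obtain ⟨γ, δ, hco, ha, hm⟩ := Int.exists_gcd_one hg
    rw [← Int.isCoprime_iff_gcd_eq_one] at hco
    set d : ℤ := (Int.gcd a m : ℤ) with hd
    have hd0 : d ≠ 0 := by rw [hd]; exact_mod_cast hg.ne'
    have key : γ * c = δ * m' := by
      apply mul_left_cancel₀ hd0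
      linear_combination hdet - c * ha + m' * hm
    obtain ⟨u, v, huv⟩ := id hco
    -- the row `(m', c)` is proportional to `(γ, δ)`; the Bézout relation computes the factor
    refine ⟨d, u * m' + v * c, γ, δ, hco, by rw [ha]; ring, by rw [hm]; ring, ?_, ?_⟩
    · linear_combination (-m') * huv - v * key
    · linear_combination (-c) * huv + u * key

/-- Primitivity as a statement about common divisors. -/
lemma isUnit_of_dvd_triple {a b c d : ℤ} (h : Int.gcd a (Int.gcd b c) = 1)
    (ha : d ∣ a) (hb : d ∣ b) (hc : d ∣ c) : IsUnit d := by
  have := Int.dvd_coe_gcd ha (Int.dvd_coe_gcd hb hc)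
  rw [h] at this
  exact isUnit_of_dvd_one (by simpa using this)

/-- The representative of an orbit is unique modulo `n`. The hypotheses equate the rank-one
matrices attached to `(0, n, j)·(α, β; γ, δ)` and `(0, n, j')·(α', β'; γ', δ')`. -/
lemma dvd_sub_of_same_orbit {n j j' α β γ δ α' β' γ' δ' : ℤ} (hn : n ≠ 0)
    (hdet : α * δ - β * γ = 1) (hdet' : α' * δ' - β' * γ' = 1)
    (h1 : (n * α + j * γ) * γ = (n * α' + j' * γ') * γ')
    (h2 : (n * α + j * γ) * δ = (n * α' + j' * γ') * δ')
    (h3 : (n * β + j * δ) * γ = (n * β' + j' * δ') * γ')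
    (h4 : (n * β + j * δ) * δ = (n * β' + j' * δ') * δ') : n ∣ j - j' := by
  have hcross : γ * δ' - δ * γ' = 0 := by
    apply (mul_eq_zero.1 (?_ : n * (γ * δ' - δ * γ') = 0)).resolve_left hn
    -- `pδ - qγ = n`, and both `p` and `q` annihilate the cross product
    linear_combination (-n * (γ * δ' - δ * γ')) * hdet
      + δ * (δ' * h1 - γ' * h2) - γ * (δ' * h3 - γ' * h4)
  obtain ⟨ε, hε⟩ : ∃ ε, ε = α' * δ - β' * γ := ⟨_, rfl⟩
  have hγ : γ = ε * γ' := by rw [hε]; linear_combination (-γ) * hdet' + α' * hcross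
  have hδ : δ = ε * δ' := by rw [hε]; linear_combination (-δ) * hdet' + β' * hcross
  have hp : n * α' + j' * γ' = ε * (n * α + j * γ) := by
    rw [hε]; linear_combination (-(n * α' + j' * γ')) * hdet' - α' * h2 + β' * h1
  have hq : n * β' + j' * δ' = ε * (n * β + j * δ) := by
    rw [hε]; linear_combination (-(n * β' + j' * δ')) * hdet' - α' * h4 + β' * h3
  have hu : ε * (α * δ' - β * γ') = 1 := by
    linear_combination hdet - α * hδ + β * hγ
  have hεε : ε * ε = 1 := by
    rcases Int.isUnit_iff.1 (IsUnit.of_mul_eq_one _ hu) with h | h <;> rw [h] <;> norm_num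
  have e1 : (j - j') * γ' = n * (α' - ε * α) := by
    linear_combination (-1) * hp - ε * j * hγ - j * γ' * hεε
  have e2 : (j - j') * δ' = n * (β' - ε * β) := by
    linear_combination (-1) * hq - ε * j * hδ - j * δ' * hεε
  refine ⟨α' * (β' - ε * β) - β' * (α' - ε * α), ?_⟩
  linear_combination α' * e2 - β' * e1 - (-j' + j) * hdet'

/-- Every primitive integer triple `(a,b,c)` (i.e. `gcd(a,b,c) = 1`) with `b² − 4ac = n²`
lies in the `SL₂(ℤ)`-orbit of exactly one of the triples `(0, n, j)` with `0 ≤ j < n` and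
`gcd(j, n) = 1`. -/
theorem primitive_orbit_classification (n : ℕ) (hn : 0 < n) (a b c : ℤ)
    (hprim : Int.gcd a (Int.gcd b c) = 1) (h : b ^ 2 - 4 * a * c = (n : ℤ) ^ 2) :
    ∃! j : ℕ, j < n ∧ Nat.gcd j n = 1 ∧ ∃ g : Matrix.SpecialLinearGroup (Fin 2) ℤ,
      formAct (0, (n : ℤ), (j : ℤ)) g = (a, b, c) := by
  have hn0 : (n : ℤ) ≠ 0 := by exact_mod_cast hn.ne'
  apply existsUnique_of_exists_of_unique
  · obtain ⟨m', hm'⟩ : ∃ m', b - n = 2 * m' := by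
      have h2 : Even ((b - n) * (b + n)) := ⟨2 * (a * c), by linear_combination h⟩
      rcases Int.even_mul.1 h2 with ⟨k, hk⟩ | ⟨k, hk⟩
      · exact ⟨k, by omega⟩
      · exact ⟨k - n, by omega⟩
    obtain ⟨p, q, γ, δ, ⟨u, v, huv⟩, ha, hm, hm1, hc⟩ :=
      exists_rank_one a (m' + n) m' c
        (by
          have hb : b = 2 * m' + n := by linarith
          subst hb
          linarith [h])
        (by
          intro d h1 h2 h3 h4
          refine isUnit_of_dvd_triple hprim h1 ?_ h4
          have : b = m' + n + m' := by linarith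
          rw [this]
          exact dvd_add h2 h3)
    have hb : b = p * δ + q * γ := by linarith
    have hnn : (n : ℤ) = p * δ - q * γ := by linarith
    obtain ⟨t, ht⟩ : ∃ t, t = p * u + q * v := ⟨_, rfl⟩
    have hp : p = n * v + t * γ := by rw [hnn, ht]; linear_combination (-p) * huv
    have hq : q = n * (-u) + t * δ := by rw [hnn, ht]; linear_combination (-q) * huv
    have hjn : ((t % n).toNat : ℤ) = t % n := Int.toNat_of_nonneg (Int.emod_nonneg _ hn0)
    have hlt : t % n < n := Int.emod_lt_of_pos _ (by exact_mod_cast hn)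
    have htk : t % n = t - n * (t / n) := by linarith [Int.emod_add_mul_ediv t n]
    refine ⟨(t % n).toNat, by omega, ?_, ?_⟩
    · have hd1 : ((Nat.gcd (t % n).toNat n : ℕ) : ℤ) ∣ t % n := by
        rw [← hjn]; exact_mod_cast Nat.gcd_dvd_left _ _
      have hd2 : ((Nat.gcd (t % n).toNat n : ℕ) : ℤ) ∣ n := by
        exact_mod_cast Nat.gcd_dvd_right _ _
      generalize Nat.gcd (t % n).toNat n = d at hd1 hd2
      have hdt : (d : ℤ) ∣ t := (Int.dvd_iff_dvd_of_dvd_sub (by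
        rw [htk]; exact (by ring : t - (n : ℤ) * (t / n) - t = n * (-(t / n))) ▸
          hd2.mul_right _)).1 hd1
      have hdp : (d : ℤ) ∣ p := by
        rw [hp]; exact dvd_add (hd2.mul_right _) (hdt.mul_right _)
      have hdq : (d : ℤ) ∣ q := by
        rw [hq]; exact dvd_add (hd2.mul_right _) (hdt.mul_right _)
      have := isUnit_of_dvd_triple hprim (ha ▸ hdp.mul_right _)
        (hb ▸ dvd_add (hdp.mul_right _) (hdq.mul_right _)) (hc ▸ hdq.mul_right _)
      simpa [Int.isUnit_iff_natAbs_eq] using this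
    · rw [hjn, htk]
      generalize t / (n : ℤ) = k
      refine ⟨⟨!![v + k * γ, -u + k * δ; γ, δ], ?_⟩, ?_⟩
      · rw [Matrix.det_fin_two_of]; linear_combination huv
      · simp only [formAct, Prod.mk.injEq]
        simp only [Matrix.of_apply, Matrix.cons_val', Matrix.cons_val_zero, Matrix.cons_val_one,
          Matrix.cons_val_fin_one]
        refine ⟨?_, ?_, ?_⟩
        · linear_combination (-1) * ha - γ * hp
        · linear_combination (-1) * hb - δ * hp - γ * hq
        · linear_combination (-1) * hc - δ * hq
  · rintro j j' ⟨hj, -, g, hg⟩ ⟨hj', -, g', hg'⟩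
    have hdet := g.det_coe
    have hdet' := g'.det_coe
    rw [Matrix.det_fin_two] at hdet hdet'
    simp only [formAct, Prod.mk.injEq] at hg hg'
    obtain ⟨ha', hb', hc'⟩ := hg'
    obtain ⟨ha, hb, hc⟩ := hg
    -- The off-diagonal entries of the rank-one matrices are `(b ± n) / 2`, so their equations are
    -- proved after doubling.
    have hdvd : (n : ℤ) ∣ (j : ℤ) - j' := by
      refine dvd_sub_of_same_orbit hn0 hdet hdet' ?_ ?_ ?_ ?_
      · linear_combination ha - ha'
      · apply mul_left_cancel₀ (two_ne_zero (α := ℤ))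
        linear_combination hb - hb' + n * hdet - n * hdet'
      · apply mul_left_cancel₀ (two_ne_zero (α := ℤ))
        linear_combination hb - hb' - n * hdet + n * hdet'
      · linear_combination hc - hc'
    have : (j : ℤ) - j' = 0 := by
      apply Int.eq_zero_of_abs_lt_dvd hdvd
      rw [abs_lt]; constructor <;> omega
    omega
end
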